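/- Let n ≥ 1, 0 < λ < n+1, κ, θ > 0 with κθ ≥ 1, and let α, β ∈ ℝ satisfy α < 1/(θ+1), β < 1/(κ+1), α + β ≥ 0 and 1/(θ+1) + 1/(κ+1) = (α+β+λ)/(n+1). Suppose u, v : ℝ^{n+1}_+ → (0,∞) satisfy the Euler–Lagrange integral system u(x,t) = t^{−α} ∫_{ℝ^{n+1}_+} v(y,z)^κ z^{−β} |(x,t)−(y,z)|^{−λ} dy dz and v(y,z) = z^{−β} ∫_{ℝ^{n+1}_+} u(x,t)^θ t^{−α} |(x,t)−(y,z)|^{−λ} dx dt for all points of ℝ^{n+1}_+, and that ∫_{ℝ^{n+1}_+} u^{θ+1} < ∞. Then u and v are radially symmetric and monotone decreasing in the x-variable about some point x₀ ∈ ℝ^n: there exists x₀ ∈ ℝ^n such that for all t > 0 and all x, x' ∈ ℝ^n, if |x−x₀| = |x'−x₀| then u(x,t) = u(x',t) and v(x,t) = v(x',t), and if |x−x₀| ≤ |x'−x₀| then u(x,t) ≥ u(x',t) and v(x,t) ≥ v(x',t). -/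

import Mathlib

open MeasureTheory ENNReal

noncomputable section

/-- The upper half space `ℝ^{n+1}_+ = {(x,t) : t > 0}`. -/
def upperHalf (n : ℕ) : Set (EuclideanSpace ℝ (Fin n) × ℝ) := {X | 0 < X.2}

/-- The Euclidean distance `|(x,t)-(y,z)|` on `ℝ^n × ℝ`. -/
def hsDist {n : ℕ} (X Y : EuclideanSpace ℝ (Fin n) × ℝ) : ℝ :=
  Real.sqrt (‖X.1 - Y.1‖ ^ 2 + (X.2 - Y.2) ^ 2)

section PartA1
open MeasureTheory ENNReal

def hPhi (δ A D : ℝ) : ℝ := D * min ((A / D) ^ δ) ((D / A) ^ δ)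

lemma hPhi_scale {δ A D : ℝ} (hA : 0 < A) : hPhi δ A (A * D) = A * hPhi δ 1 D := by
  unfold hPhi
  have h1 : A / (A * D) = 1 / D := by field_simp
  have h2 : A * D / A = D / 1 := by field_simp
  rw [h1, h2]; ring

/-- pointwise bound, near part -/
lemma near_pointwise {p q δ A B D : ℝ} (hδ0 : 0 < δ) (hδp : δ ≤ p) (hδq : δ ≤ q)
    (hδs : δ ≤ 1 - p - q) (hA : 0 < A) (hB : 0 < B) (hD : 0 < D) :
    A ^ (1 - p) * B ^ (1 - q) * D ^ (p + q) ≤ A * B + A * hPhi δ A D + B * hPhi δ B D := by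
  obtain ⟨a, rfl⟩ : ∃ a, Real.exp a = A := ⟨Real.log A, Real.exp_log hA⟩
  obtain ⟨b, rfl⟩ : ∃ a, Real.exp a = B := ⟨Real.log B, Real.exp_log hB⟩
  obtain ⟨d, rfl⟩ : ∃ a, Real.exp a = D := ⟨Real.log D, Real.exp_log hD⟩
  have key : ∀ x : ℝ, Real.exp (x + d - δ * |x - d|) ≤ Real.exp x * hPhi δ (Real.exp x) (Real.exp d) := by
    intro x
    unfold hPhi
    rw [← Real.exp_sub, ← Real.exp_sub, ← Real.exp_mul, ← Real.exp_mul,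
      show x + d - δ * |x - d| = x + (d + (- (δ * |x - d|))) by ring, Real.exp_add, Real.exp_add]
    gcongr
    apply le_min
    · apply Real.exp_le_exp.2
      have := neg_abs_le (x - d)
      nlinarith
    · apply Real.exp_le_exp.2
      have := le_abs_self (x - d)
      nlinarith
  have hL : Real.exp a ^ (1 - p) * Real.exp b ^ (1 - q) * Real.exp d ^ (p + q)
      = Real.exp (a * (1 - p) + b * (1 - q) + d * (p + q)) := by
    rw [← Real.exp_mul, ← Real.exp_mul, ← Real.exp_mul, ← Real.exp_add, ← Real.exp_add]
  rw [hL]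
  have hka := key a
  have hkb := key b
  have e1 := (Real.exp_pos (a + d - δ * |a - d|)).le
  have e2 := (Real.exp_pos (b + d - δ * |b - d|)).le
  have e3 : 0 < Real.exp a * Real.exp b := by positivity
  have h3 : a * (1 - p) + b * (1 - q) + d * (p + q) ≤ a + b ∨
      a * (1 - p) + b * (1 - q) + d * (p + q) ≤ a + d - δ * |a - d| ∨
      a * (1 - p) + b * (1 - q) + d * (p + q) ≤ b + d - δ * |b - d| := by
    rcases le_total d a with hda | hda <;> rcases le_total d b with hdb | hdb
    · left; nlinarith
    · right; left
      rw [abs_of_nonneg (by linarith)]; nlinarith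
    · right; right
      rw [abs_of_nonneg (by linarith)]; nlinarith
    · rcases le_total a b with hab | hab
      · right; right
        rw [abs_of_nonpos (by linarith)]; nlinarith
      · right; left
        rw [abs_of_nonpos (by linarith)]; nlinarith
  rcases h3 with h | h | h
  · have := Real.exp_le_exp.2 h
    rw [Real.exp_add a b] at this
    linarith
  · have := Real.exp_le_exp.2 h
    linarith
  · have := Real.exp_le_exp.2 h
    linarith

lemma hPhi_nonneg {δ A D : ℝ} (hA : 0 ≤ A) (hD : 0 ≤ D) : 0 ≤ hPhi δ A D := by
  unfold hPhi; positivity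

/-- pointwise bound, far part -/
lemma far_pointwise {p q A B D ρ : ℝ} (hp : 0 < p) (hq : 0 < q)
    (hs : p + q < 1) (hA : 0 < A) (hB : 0 < B) (hD : 0 < D) (hρ : 0 < ρ) :
    A ^ (1 - p) * B ^ (1 - q) * D ^ (p + q) ≤ A * B + A * (D * ρ ^ p) + B * (D * (ρ ^ q)⁻¹) := by
  have h := Real.geom_mean_le_arith_mean3_weighted (w₁ := 1 - p - q) (w₂ := q) (w₃ := p)
    (p₁ := A * B) (p₂ := A * (D * ρ ^ p)) (p₃ := B * (D * (ρ ^ q)⁻¹))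
    (by linarith) hq.le hp.le (by positivity) (by positivity) (by positivity) (by ring)
  have e1 : (A * B) ^ (1 - p - q) * (A * (D * ρ ^ p)) ^ q * (B * (D * (ρ ^ q)⁻¹)) ^ p
      = A ^ (1 - p) * B ^ (1 - q) * D ^ (p + q) := by
    rw [Real.mul_rpow hA.le hB.le, Real.mul_rpow hA.le (by positivity), Real.mul_rpow hD.le (by positivity),
      Real.mul_rpow hB.le (by positivity), Real.mul_rpow hD.le (by positivity), ← Real.rpow_neg hρ.le,
      ← Real.rpow_mul hρ.le, ← Real.rpow_mul hρ.le]
    rw [show (1 - p) = (1 - p - q) + q by ring, show 1 - q = (1 - p - q) + p by ring,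
      Real.rpow_add hA, Real.rpow_add hB, Real.rpow_add hD]
    rw [show -q * p = - (p * q) by ring, Real.rpow_neg hρ.le]
    have : ρ ^ (p * q) ≠ 0 := by positivity
    rw [show 1 - p - q + q - q = 1 - p - q by ring]
    field_simp
  rw [e1] at h
  have a1 : 0 < A * B := by positivity
  have a2 : 0 < A * (D * ρ ^ p) := by positivity
  have a3 : 0 < B * (D * (ρ ^ q)⁻¹) := by positivity
  nlinarith

end PartA1

section PartA2
open MeasureTheory ENNReal

instance instHaarProd (n : ℕ) : (volume : Measure (EuclideanSpace ℝ (Fin n) × ℝ)).IsAddHaarMeasure := by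
  rw [Measure.volume_eq_prod]; infer_instance

lemma lint_aff (n : ℕ) (f : EuclideanSpace ℝ (Fin n) × ℝ → ℝ≥0∞) (hf : Measurable f)
    (Z : EuclideanSpace ℝ (Fin n) × ℝ) {r : ℝ} (hr : 0 < r) :
    ∫⁻ Y, f Y = ENNReal.ofReal (r ^ (n + 1)) * ∫⁻ W, f (Z + r • W) := by
  have h1 : ∫⁻ Y, f Y = ∫⁻ Y, f (Z + Y) := (lintegral_add_left_eq_self f Z).symm
  have hm : Measurable (fun Y => f (Z + Y)) := hf.comp (measurable_const_add Z)
  have h2 : ∫⁻ W, f (Z + r • W) = ENNReal.ofReal ((r ^ (n + 1))⁻¹) * ∫⁻ Y, f (Z + Y) := by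
    have := lintegral_map (μ := (volume : Measure (EuclideanSpace ℝ (Fin n) × ℝ))) hm
      (measurable_const_smul r)
    rw [← this, Measure.map_addHaar_smul _ hr.ne', lintegral_smul_measure]
    simp [abs_of_pos, hr]
  rw [h2, h1, ← mul_assoc, ← ENNReal.ofReal_mul (by positivity), mul_inv_cancel₀ (by positivity)]
  simp

lemma hPhi_one_int (n : ℕ) {δ : ℝ} (hδ : 0 < δ) :
    ∫⁻ W : EuclideanSpace ℝ (Fin n) × ℝ, ENNReal.ofReal (hPhi δ 1 (‖W‖ ^ (-((n : ℝ) + 1)))) < ⊤ := by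
  have hfin : Module.finrank ℝ (EuclideanSpace ℝ (Fin n) × ℝ) = n + 1 := by simp
  have hN : (0 : ℝ) < (n : ℝ) + 1 := by positivity
  have hle : ∀ W : EuclideanSpace ℝ (Fin n) × ℝ,
      ENNReal.ofReal (hPhi δ 1 (‖W‖ ^ (-((n : ℝ) + 1)))) ≤
      (Metric.ball (0 : EuclideanSpace ℝ (Fin n) × ℝ) 1).indicator
        (fun W => ENNReal.ofReal (‖W‖ ^ (- (((n : ℝ) + 1) * (1 - δ))))) W
      + ENNReal.ofReal (2 ^ (((n : ℝ) + 1) * (1 + δ))) * ENNReal.ofReal ((1 + ‖W‖) ^ (- (((n : ℝ) + 1) * (1 + δ)))) := by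
    intro W
    rcases eq_or_ne W 0 with rfl | h0
    · simp [hPhi, Real.zero_rpow (by linarith : -1 + -(n : ℝ) ≠ 0)]
    have hW : 0 < ‖W‖ := norm_pos_iff.2 h0
    by_cases hb : W ∈ Metric.ball (0 : EuclideanSpace ℝ (Fin n) × ℝ) 1
    · rw [Set.indicator_of_mem hb]
      refine le_trans ?_ le_self_add
      apply ENNReal.ofReal_le_ofReal
      unfold hPhi
      have : ‖W‖ ^ (-((n : ℝ) + 1)) * (1 / ‖W‖ ^ (-((n : ℝ) + 1))) ^ δ = ‖W‖ ^ (- (((n : ℝ) + 1) * (1 - δ))) := by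
        rw [one_div, ← Real.rpow_neg hW.le, ← Real.rpow_mul hW.le, ← Real.rpow_add hW]
        congr 1; ring
      rw [← this]
      gcongr
      exact min_le_left _ _
    · rw [Set.indicator_of_notMem hb, zero_add, ← ENNReal.ofReal_mul (by positivity)]
      apply ENNReal.ofReal_le_ofReal
      have h1 : 1 ≤ ‖W‖ := by simpa using hb
      unfold hPhi
      have : ‖W‖ ^ (-((n : ℝ) + 1)) * (‖W‖ ^ (-((n : ℝ) + 1)) / 1) ^ δ = ‖W‖ ^ (- (((n : ℝ) + 1) * (1 + δ))) := by
        rw [div_one, ← Real.rpow_mul hW.le, ← Real.rpow_add hW]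
        congr 1; ring
      calc _ ≤ ‖W‖ ^ (-((n : ℝ) + 1)) * (‖W‖ ^ (-((n : ℝ) + 1)) / 1) ^ δ := by
            gcongr
            exact min_le_right _ _
        _ = ‖W‖ ^ (- (((n : ℝ) + 1) * (1 + δ))) := this
        _ = 2 ^ (((n : ℝ) + 1) * (1 + δ)) * (2 * ‖W‖) ^ (- (((n : ℝ) + 1) * (1 + δ))) := by
            rw [Real.mul_rpow (by norm_num) hW.le, ← mul_assoc, ← Real.rpow_add (by norm_num)]
            simp
        _ ≤ _ := by
            refine mul_le_mul_of_nonneg_left ?_ (by positivity)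
            apply Real.rpow_le_rpow_of_nonpos (by positivity) (by linarith)
            have : 0 < ((n : ℝ) + 1) * (1 + δ) := by positivity
            linarith
  refine (lintegral_mono hle).trans_lt ?_
  rw [lintegral_add_right _ (by fun_prop), lintegral_indicator Metric.isOpen_ball.measurableSet,
    lintegral_const_mul _ (by fun_prop)]
  refine ENNReal.add_lt_top.2 ⟨?_, ENNReal.mul_lt_top ENNReal.ofReal_lt_top ?_⟩
  · have := integrableOn_ball_of_norm_le_rpow (μ := (volume : Measure (EuclideanSpace ℝ (Fin n) × ℝ)))
      (by rw [hfin]; omega) (f := fun W => ‖W‖ ^ (- (((n : ℝ) + 1) * (1 - δ)))) (C := 1)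
      (α := ((n : ℝ) + 1) * (1 - δ)) (r := 1) (by rw [hfin]; push_cast; nlinarith)
      (Filter.Eventually.of_forall fun x => by
        rw [one_mul, Real.norm_of_nonneg (by positivity)])
      (Measurable.aestronglyMeasurable (by fun_prop))
    have h2 := this.lintegral_lt_top
    exact h2
  · apply finite_integral_one_add_norm
    rw [hfin]; push_cast; nlinarith

lemma near_int (n : ℕ) {δ : ℝ} (hδ : 0 < δ) :
    ∃ C : ℝ≥0∞, C ≠ ⊤ ∧ ∀ (X : EuclideanSpace ℝ (Fin n) × ℝ) (A : ℝ), 0 < A →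
      ∫⁻ Y, ENNReal.ofReal (hPhi δ A (‖X - Y‖ ^ (-((n : ℝ) + 1)))) ≤ C := by
  refine ⟨_, (hPhi_one_int n hδ).ne, fun X A hA => le_of_eq ?_⟩
  have hN : (0 : ℝ) < (n : ℝ) + 1 := by positivity
  have hr : 0 < A ^ (- ((n : ℝ) + 1)⁻¹) := by positivity
  have hm : Measurable fun Y : EuclideanSpace ℝ (Fin n) × ℝ => ENNReal.ofReal (hPhi δ A (‖X - Y‖ ^ (-((n : ℝ) + 1)))) := by
    unfold hPhi; fun_prop
  rw [lint_aff n _ hm X hr]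
  have e : ∀ W : EuclideanSpace ℝ (Fin n) × ℝ,
      ENNReal.ofReal (hPhi δ A (‖X - (X + A ^ (- ((n : ℝ) + 1)⁻¹) • W)‖ ^ (-((n : ℝ) + 1))))
      = ENNReal.ofReal A * ENNReal.ofReal (hPhi δ 1 (‖W‖ ^ (-((n : ℝ) + 1)))) := by
    intro W
    rw [← ENNReal.ofReal_mul hA.le, ← hPhi_scale hA]
    congr 2
    rw [sub_add_cancel_left, norm_neg, norm_smul, Real.norm_of_nonneg hr.le, Real.mul_rpow hr.le (norm_nonneg _),
      ← Real.rpow_mul hA.le]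
    rw [neg_mul_neg, inv_mul_cancel₀ hN.ne', Real.rpow_one]
  simp_rw [e]
  rw [lintegral_const_mul _ (by unfold hPhi; fun_prop), ← mul_assoc, ← ENNReal.ofReal_mul (by positivity)]
  have : (A ^ (- ((n : ℝ) + 1)⁻¹)) ^ (n + 1) * A = 1 := by
    rw [← Real.rpow_natCast, ← Real.rpow_mul hA.le]
    push_cast
    rw [neg_mul, inv_mul_cancel₀ hN.ne', Real.rpow_neg_one, inv_mul_cancel₀ hA.ne']
  rw [this]; simp

lemma oned_int {c l : ℝ} (hc : c < 1) (hl : 0 ≤ l) (hcl : 1 < c + l) :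
    ∫⁻ z in Set.Ioi (0:ℝ), ENNReal.ofReal (z ^ (-c) * (1 + z) ^ (-l)) < ⊤ := by
  rw [← Set.Ioo_union_Ici_eq_Ioi (show (0:ℝ) < 1 by norm_num)]
  refine (lintegral_union_le _ _ _).trans_lt (ENNReal.add_lt_top.2 ⟨?_, ?_⟩)
  · have h := ((intervalIntegral.integrableOn_Ioo_rpow_iff (s := -c) (show (0:ℝ) < 1 by norm_num)).2 (by linarith)).lintegral_lt_top
    refine lt_of_le_of_lt ?_ h
    refine setLIntegral_mono' measurableSet_Ioo fun z hz => ENNReal.ofReal_le_ofReal ?_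
    have h0 := hz.1
    have : (1 + z) ^ (-l) ≤ 1 := Real.rpow_le_one_of_one_le_of_nonpos (by linarith) (by linarith)
    have h2 : 0 < z ^ (-c) := by positivity
    nlinarith
  · rw [Measure.restrict_congr_set (Ioi_ae_eq_Ici (a := (1:ℝ))).symm]
    have h := (integrableOn_Ioi_rpow_of_lt (a := -(c + l)) (by linarith) (show (0:ℝ) < 1 by norm_num)).lintegral_lt_top
    refine lt_of_le_of_lt ?_ h
    refine setLIntegral_mono' measurableSet_Ioi fun z hz => ENNReal.ofReal_le_ofReal ?_
    have h0 : (1:ℝ) < z := hz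
    rw [show -(c + l) = -c + -l by ring, Real.rpow_add (by linarith)]
    refine mul_le_mul_of_nonneg_left ?_ (by positivity)
    apply Real.rpow_le_rpow_of_nonpos (by positivity) (by linarith) (by linarith)

lemma upperHalf_eq (n : ℕ) : upperHalf n = Set.univ ×ˢ Set.Ioi (0:ℝ) := by
  ext X; simp [upperHalf]

lemma measurableSet_upperHalf (n : ℕ) : MeasurableSet (upperHalf n) := by
  rw [upperHalf_eq]; exact MeasurableSet.univ.prod measurableSet_Ioi

lemma far_one (n : ℕ) {c l : ℝ} (hc : c < 1) (_hl : (n : ℝ) < l) (hcl : (n : ℝ) + 1 < c + l) :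
    ∫⁻ W in upperHalf n, ENNReal.ofReal (W.2 ^ (-c) * (‖W.1‖ + 1 + W.2) ^ (-l)) < ⊤ := by
  obtain ⟨η, h0, h1⟩ : ∃ η, 0 < η ∧ η < min (l - n) (c + l - n - 1) :=
    exists_between (lt_min (by linarith) (by linarith))
  have h2 := (lt_min_iff.1 h1).1
  have h3 := (lt_min_iff.1 h1).2
  have key : ∫⁻ W in upperHalf n, ENNReal.ofReal (W.2 ^ (-c) * (‖W.1‖ + 1 + W.2) ^ (-l)) ≤
      ∫⁻ W in upperHalf n, ENNReal.ofReal ((1 + ‖W.1‖) ^ (-(n + η))) *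
        ENNReal.ofReal (W.2 ^ (-c) * (1 + W.2) ^ (-(l - n - η))) := by
    refine setLIntegral_mono' (measurableSet_upperHalf n) fun W hW => ?_
    have hW : 0 < W.2 := hW
    rw [← ENNReal.ofReal_mul (by positivity)]
    apply ENNReal.ofReal_le_ofReal
    rw [show -l = -(n + η) + -(l - n - η) by ring, Real.rpow_add (by positivity), mul_left_comm]
    have a1 : (‖W.1‖ + 1 + W.2) ^ (-(n + η)) ≤ (1 + ‖W.1‖) ^ (-(n + η)) := by
      have : (0:ℝ) ≤ n := by positivity
      apply Real.rpow_le_rpow_of_nonpos (by positivity) (by linarith) (by linarith)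
    have a2 : (‖W.1‖ + 1 + W.2) ^ (-(l - n - η)) ≤ (1 + W.2) ^ (-(l - n - η)) := by
      have := norm_nonneg W.1
      apply Real.rpow_le_rpow_of_nonpos (by positivity) (by linarith) (by linarith)
    gcongr
  refine key.trans_lt ?_
  rw [upperHalf_eq, Measure.volume_eq_prod, ← Measure.prod_restrict,
    lintegral_prod_mul (f := fun y => ENNReal.ofReal ((1 + ‖y‖) ^ (-(n + η))))
      (g := fun z => ENNReal.ofReal (z ^ (-c) * (1 + z) ^ (-(l - n - η)))) (by fun_prop) (by fun_prop)]
  refine ENNReal.mul_lt_top ?_ ?_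
  · rw [Measure.restrict_univ]
    apply finite_integral_one_add_norm
    simp; linarith
  · apply oned_int hc (by linarith) (by linarith)

lemma far_int (n : ℕ) {c l : ℝ} (hc : c < 1) (_hl : (n : ℝ) < l) (hcl : (n : ℝ) + 1 < c + l) :
    ∃ C : ℝ≥0∞, C ≠ ⊤ ∧ ∀ X ∈ upperHalf n,
      ∫⁻ Y in upperHalf n, ENNReal.ofReal (X.2 ^ (c + l - (n + 1)) * Y.2 ^ (-c) * (‖X.1 - Y.1‖ + X.2 + Y.2) ^ (-l)) ≤ C := by
  refine ⟨_, (far_one n hc _hl hcl).ne, fun X hX => le_of_eq ?_⟩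
  have ht : 0 < X.2 := hX
  have hm : Measurable fun Y : EuclideanSpace ℝ (Fin n) × ℝ =>
      ENNReal.ofReal (X.2 ^ (c + l - (n + 1)) * Y.2 ^ (-c) * (‖X.1 - Y.1‖ + X.2 + Y.2) ^ (-l)) := by fun_prop
  rw [← lintegral_indicator (measurableSet_upperHalf n), ← lintegral_indicator (measurableSet_upperHalf n),
    lint_aff n _ (hm.indicator (measurableSet_upperHalf n)) (X.1, 0) ht, ← lintegral_const_mul' _ _ ENNReal.ofReal_ne_top]
  congr 1
  ext W
  by_cases hW : W ∈ upperHalf n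
  · have hW' : 0 < W.2 := hW
    have : ((X.1, 0) + X.2 • W : EuclideanSpace ℝ (Fin n) × ℝ) ∈ upperHalf n := by
      simp only [upperHalf, Set.mem_setOf_eq, Prod.snd_add, Prod.smul_snd, smul_eq_mul, zero_add]
      positivity
    rw [Set.indicator_of_mem hW, Set.indicator_of_mem this, ← ENNReal.ofReal_mul (by positivity)]
    congr 1
    simp only [Prod.snd_add, Prod.smul_snd, smul_eq_mul, zero_add, Prod.fst_add, Prod.smul_fst,
      sub_add_cancel_left, norm_neg, norm_smul, Real.norm_of_nonneg ht.le]
    rw [show X.2 * ‖W.1‖ + X.2 + X.2 * W.2 = X.2 * (‖W.1‖ + 1 + W.2) by ring,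
      Real.mul_rpow ht.le hW'.le, Real.mul_rpow ht.le (by positivity), ← Real.rpow_natCast]
    have : X.2 ^ ((n + 1 : ℕ) : ℝ) * X.2 ^ (c + l - (n + 1)) * X.2 ^ (-c) * X.2 ^ (-l) = 1 := by
      rw [← Real.rpow_add ht, ← Real.rpow_add ht, ← Real.rpow_add ht]
      push_cast
      rw [show (n : ℝ) + 1 + (c + l - (n + 1)) + -c + -l = 0 by ring, Real.rpow_zero]
    linear_combination (W.2 ^ (-c) * (‖W.1‖ + 1 + W.2) ^ (-l)) * this
  · have : ((X.1, 0) + X.2 • W : EuclideanSpace ℝ (Fin n) × ℝ) ∉ upperHalf n := by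
      simp only [upperHalf, Set.mem_setOf_eq, Prod.snd_add, Prod.smul_snd, smul_eq_mul, zero_add, not_lt] at hW ⊢
      nlinarith
    rw [Set.indicator_of_notMem hW, Set.indicator_of_notMem this, mul_zero]

end PartA2

section PartA3
open MeasureTheory ENNReal

/-- the full weighted kernel -/
def ker {n : ℕ} (α β lam : ℝ) (X Y : EuclideanSpace ℝ (Fin n) × ℝ) : ℝ≥0∞ :=
  ENNReal.ofReal (X.2 ^ (-α)) * ENNReal.ofReal (Y.2 ^ (-β)) * ENNReal.ofReal (hsDist X Y) ^ (-lam)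

lemma hsDist_comm {n : ℕ} (X Y : EuclideanSpace ℝ (Fin n) × ℝ) : hsDist X Y = hsDist Y X := by
  unfold hsDist
  rw [norm_sub_rev, show (X.2 - Y.2) ^ 2 = (Y.2 - X.2) ^ 2 by ring]

lemma ker_swap {n : ℕ} (α β lam : ℝ) (X Y : EuclideanSpace ℝ (Fin n) × ℝ) :
    ker α β lam X Y = ker β α lam Y X := by
  unfold ker
  rw [hsDist_comm, mul_comm (ENNReal.ofReal (X.2 ^ (-α)))]

lemma hsDist_nonneg {n : ℕ} (X Y : EuclideanSpace ℝ (Fin n) × ℝ) : 0 ≤ hsDist X Y := Real.sqrt_nonneg _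

lemma norm_fst_le_hsDist {n : ℕ} (X Y : EuclideanSpace ℝ (Fin n) × ℝ) : ‖X.1 - Y.1‖ ≤ hsDist X Y := by
  unfold hsDist
  apply Real.le_sqrt_of_sq_le; nlinarith [sq_nonneg (X.2 - Y.2)]

lemma abs_snd_le_hsDist {n : ℕ} (X Y : EuclideanSpace ℝ (Fin n) × ℝ) : |X.2 - Y.2| ≤ hsDist X Y := by
  unfold hsDist
  apply Real.le_sqrt_of_sq_le; rw [sq_abs]; nlinarith [sq_nonneg (‖X.1 - Y.1‖)]

lemma norm_le_hsDist {n : ℕ} (X Y : EuclideanSpace ℝ (Fin n) × ℝ) : ‖X - Y‖ ≤ hsDist X Y := by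
  rw [Prod.norm_def]
  exact max_le (norm_fst_le_hsDist X Y) (abs_snd_le_hsDist X Y)

lemma hsDist_pos {n : ℕ} {X Y : EuclideanSpace ℝ (Fin n) × ℝ} (h : X ≠ Y) : 0 < hsDist X Y :=
  lt_of_lt_of_le (norm_pos_iff.2 (sub_ne_zero.2 h)) (norm_le_hsDist X Y)

lemma ker_eq_ofReal {n : ℕ} (α β lam : ℝ) {X Y : EuclideanSpace ℝ (Fin n) × ℝ} (hX : X ∈ upperHalf n)
    (hY : Y ∈ upperHalf n) (h : X ≠ Y) :
    ker α β lam X Y = ENNReal.ofReal (X.2 ^ (-α) * Y.2 ^ (-β) * hsDist X Y ^ (-lam)) := by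
  have h1 : 0 < X.2 := hX
  have h2 : 0 < Y.2 := hY
  have := hsDist_pos h
  unfold ker
  rw [ENNReal.ofReal_rpow_of_pos this, ENNReal.ofReal_mul (by positivity), ENNReal.ofReal_mul (by positivity)]

lemma rpow_half_bound {M t a : ℝ} (hM : 0 < M) (h1 : M / 2 ≤ t) (h2 : t ≤ M) :
    t ^ (-a) ≤ 2 ^ |a| * M ^ (-a) := by
  have ht : 0 < t := by linarith
  rcases le_total 0 a with h | h
  · rw [abs_of_nonneg h]
    calc t ^ (-a) ≤ (M / 2) ^ (-a) := Real.rpow_le_rpow_of_nonpos (by positivity) h1 (by linarith)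
      _ = 2 ^ a * M ^ (-a) := by
        rw [Real.div_rpow hM.le (by norm_num), Real.rpow_neg (by norm_num : (0:ℝ) ≤ 2)]
        field_simp
  · calc t ^ (-a) ≤ M ^ (-a) := Real.rpow_le_rpow ht.le h2 (by linarith)
      _ ≤ _ := by
        have : (1:ℝ) ≤ 2 ^ |a| := Real.one_le_rpow (by norm_num) (abs_nonneg _)
        have h3 : 0 < M ^ (-a) := by positivity
        nlinarith

lemma ker_real_le {n : ℕ} {α β lam : ℝ} (hαβ : 0 ≤ α + β) (hlam : 0 < lam)
    {X Y : EuclideanSpace ℝ (Fin n) × ℝ} (hX : X ∈ upperHalf n)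
    (hY : Y ∈ upperHalf n) (h : X ≠ Y) :
    X.2 ^ (-α) * Y.2 ^ (-β) * hsDist X Y ^ (-lam) ≤
      (2 ^ (|α| + |β|) + 5 ^ lam) * (‖X - Y‖ ^ (-(α + β + lam)) +
        X.2 ^ (-α) * Y.2 ^ (-β) * (‖X.1 - Y.1‖ + X.2 + Y.2) ^ (-lam)) := by
  have ht : 0 < X.2 := hX
  have hz : 0 < Y.2 := hY
  have hd := hsDist_pos h
  have hn : 0 < ‖X - Y‖ := norm_pos_iff.2 (sub_ne_zero.2 h)
  set d := hsDist X Y with hdd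
  have h1 := norm_fst_le_hsDist X Y
  have h2 := abs_le.1 (abs_snd_le_hsDist X Y)
  have h3 := norm_le_hsDist X Y
  rw [← hdd] at h1 h2 h3
  set M := max X.2 Y.2 with hM
  have hMt : X.2 ≤ M := le_max_left _ _
  have hMz : Y.2 ≤ M := le_max_right _ _
  have hMp : 0 < M := lt_of_lt_of_le ht hMt
  have p1 : 0 ≤ ‖X - Y‖ ^ (-(α + β + lam)) := by positivity
  have p2 : 0 ≤ X.2 ^ (-α) * Y.2 ^ (-β) * (‖X.1 - Y.1‖ + X.2 + Y.2) ^ (-lam) := by positivity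
  have q1 : (0:ℝ) < 2 ^ (|α| + |β|) := by positivity
  have q2 : (0:ℝ) < 5 ^ lam := by positivity
  rcases le_or_gt (M / 2) d with hc | hc
  · have : d ^ (-lam) ≤ 5 ^ lam * (‖X.1 - Y.1‖ + X.2 + Y.2) ^ (-lam) := by
      calc d ^ (-lam) = 5 ^ lam * (5 * d) ^ (-lam) := by
            rw [Real.mul_rpow (by norm_num) hd.le, ← mul_assoc, ← Real.rpow_add (by norm_num)]; simp
        _ ≤ _ := by
          refine mul_le_mul_of_nonneg_left ?_ q2.le
          apply Real.rpow_le_rpow_of_nonpos (by positivity) (by linarith) (by linarith)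
    have h4 : X.2 ^ (-α) * Y.2 ^ (-β) * d ^ (-lam) ≤ 5 ^ lam * (X.2 ^ (-α) * Y.2 ^ (-β) * (‖X.1 - Y.1‖ + X.2 + Y.2) ^ (-lam)) := by
      rw [mul_left_comm]
      exact mul_le_mul_of_nonneg_left this (by positivity)
    nlinarith [mul_nonneg q1.le p1, mul_nonneg q1.le p2, mul_nonneg q2.le p1]
  · have hmin : M / 2 ≤ X.2 ∧ M / 2 ≤ Y.2 := by
      rcases le_total X.2 Y.2 with h | h
      · rw [max_eq_right h] at hM
        constructor <;> linarith
      · rw [max_eq_left h] at hM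
        constructor <;> linarith
    have a1 := rpow_half_bound (a := α) hMp hmin.1 hMt
    have a2 := rpow_half_bound (a := β) hMp hmin.2 hMz
    have a3 : M ^ (-(α + β)) ≤ ‖X - Y‖ ^ (-(α + β)) :=
      Real.rpow_le_rpow_of_nonpos hn (by linarith) (by linarith)
    have a4 : d ^ (-lam) ≤ ‖X - Y‖ ^ (-lam) := Real.rpow_le_rpow_of_nonpos hn h3 (by linarith)
    have h4 : X.2 ^ (-α) * Y.2 ^ (-β) * d ^ (-lam) ≤ 2 ^ (|α| + |β|) * ‖X - Y‖ ^ (-(α + β + lam)) := by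
      calc X.2 ^ (-α) * Y.2 ^ (-β) * d ^ (-lam) ≤ (2 ^ |α| * M ^ (-α)) * (2 ^ |β| * M ^ (-β)) * ‖X - Y‖ ^ (-lam) := by
            gcongr
        _ = 2 ^ (|α| + |β|) * (M ^ (-(α + β)) * ‖X - Y‖ ^ (-lam)) := by
            rw [Real.rpow_add (by norm_num), show -(α + β) = -α + -β by ring, Real.rpow_add hMp]; ring
        _ ≤ 2 ^ (|α| + |β|) * (‖X - Y‖ ^ (-(α + β)) * ‖X - Y‖ ^ (-lam)) := by gcongr
        _ = _ := by rw [← Real.rpow_add hn]; congr 2; ring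
    nlinarith [mul_nonneg q2.le p1, mul_nonneg q2.le p2, mul_nonneg q1.le p2]

/-- far weights -/
def far1 {n : ℕ} (a b l : ℝ) (X Y : EuclideanSpace ℝ (Fin n) × ℝ) : ℝ :=
  X.2 ^ a * Y.2 ^ b * (‖X.1 - Y.1‖ + X.2 + Y.2) ^ (-l)

lemma hls_pointwise {n : ℕ} {p q δ α β lam s : ℝ} (hp : 0 < p) (hq : 0 < q) (hpq : p + q < 1)
    (hs : s * (p + q) = 1)
    (hbal : (p + q) * ((n : ℝ) + 1) = α + β + lam)
    (hδ0 : 0 < δ) (hδp : δ ≤ p) (hδq : δ ≤ q) (hδs : δ ≤ 1 - p - q)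
    (hαβ : 0 ≤ α + β) (hlam : 0 < lam) {A B : ℝ} (hA : 0 < A) (hB : 0 < B)
    {X Y : EuclideanSpace ℝ (Fin n) × ℝ} (hX : X ∈ upperHalf n)
    (hY : Y ∈ upperHalf n) (h : X ≠ Y) :
    A ^ (1 - p) * B ^ (1 - q) * (X.2 ^ (-α) * Y.2 ^ (-β) * hsDist X Y ^ (-lam)) ≤
      (2 ^ (|α| + |β|) + 5 ^ lam) *
      ((A * B + A * hPhi δ A (‖X - Y‖ ^ (-((n : ℝ) + 1))) + B * hPhi δ B (‖X - Y‖ ^ (-((n : ℝ) + 1)))) +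
       (A * B + A * far1 (s * (p - α)) (- (s * (p + β))) (s * lam) X Y
        + B * far1 (- (s * (q + α))) (s * (q - β)) (s * lam) X Y)) := by
  have ht : 0 < X.2 := hX
  have hz : 0 < Y.2 := hY
  have hn : 0 < ‖X - Y‖ := norm_pos_iff.2 (sub_ne_zero.2 h)
  have h1 := near_pointwise hδ0 hδp hδq hδs hA hB (show 0 < ‖X - Y‖ ^ (-((n : ℝ) + 1)) by positivity)
  have hR : 0 < ‖X.1 - Y.1‖ + X.2 + Y.2 := by positivity
  have h2 := far_pointwise (ρ := (X.2 / Y.2) ^ s) hp hq hpq hA hB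
    (show 0 < far1 (- (s * α)) (- (s * β)) (s * lam) X Y by unfold far1; positivity) (by positivity)
  have e1 : (‖X - Y‖ ^ (-((n : ℝ) + 1))) ^ (p + q) = ‖X - Y‖ ^ (-(α + β + lam)) := by
    rw [← Real.rpow_mul hn.le]; congr 1; linarith
  have e2 : (far1 (- (s * α)) (- (s * β)) (s * lam) X Y) ^ (p + q) =
      X.2 ^ (-α) * Y.2 ^ (-β) * (‖X.1 - Y.1‖ + X.2 + Y.2) ^ (-lam) := by
    unfold far1
    rw [Real.mul_rpow (by positivity) (by positivity), Real.mul_rpow (by positivity) (by positivity),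
      ← Real.rpow_mul ht.le, ← Real.rpow_mul hz.le, ← Real.rpow_mul hR.le]
    congr 1
    · congr 1
      · congr 1; linear_combination (-α) * hs
      · congr 1; linear_combination (-β) * hs
    · congr 1; linear_combination (-lam) * hs
  have e3 : far1 (- (s * α)) (- (s * β)) (s * lam) X Y * ((X.2 / Y.2) ^ s) ^ p =
      far1 (s * (p - α)) (- (s * (p + β))) (s * lam) X Y := by
    unfold far1
    rw [← Real.rpow_mul (by positivity), Real.div_rpow ht.le hz.le,
      show s * (p - α) = - (s * α) + s * p by ring, Real.rpow_add ht,
      show - (s * (p + β)) = - (s * β) + - (s * p) by ring, Real.rpow_add hz, Real.rpow_neg hz.le (s * p)]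
    ring
  have e4 : far1 (- (s * α)) (- (s * β)) (s * lam) X Y * (((X.2 / Y.2) ^ s) ^ q)⁻¹ =
      far1 (- (s * (q + α))) (s * (q - β)) (s * lam) X Y := by
    unfold far1
    rw [← Real.rpow_mul (by positivity), Real.div_rpow ht.le hz.le,
      show s * (q - β) = - (s * β) + s * q by ring, Real.rpow_add hz,
      show - (s * (q + α)) = - (s * α) + - (s * q) by ring, Real.rpow_add ht, Real.rpow_neg ht.le (s * q)]
    have := Real.rpow_pos_of_pos ht (s * q)
    field_simp
  rw [e1] at h1
  rw [e2, e3, e4] at h2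
  have h3 := ker_real_le hαβ hlam hX hY h
  have hAB : 0 ≤ A ^ (1 - p) * B ^ (1 - q) := by positivity
  calc _ ≤ A ^ (1 - p) * B ^ (1 - q) * ((2 ^ (|α| + |β|) + 5 ^ lam) * (‖X - Y‖ ^ (-(α + β + lam)) +
        X.2 ^ (-α) * Y.2 ^ (-β) * (‖X.1 - Y.1‖ + X.2 + Y.2) ^ (-lam))) := mul_le_mul_of_nonneg_left h3 hAB
    _ = (2 ^ (|α| + |β|) + 5 ^ lam) * (A ^ (1 - p) * B ^ (1 - q) * ‖X - Y‖ ^ (-(α + β + lam)) +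
        A ^ (1 - p) * B ^ (1 - q) * (X.2 ^ (-α) * Y.2 ^ (-β) * (‖X.1 - Y.1‖ + X.2 + Y.2) ^ (-lam))) := by ring
    _ ≤ _ := by
      refine mul_le_mul_of_nonneg_left ?_ (by positivity)
      exact add_le_add h1 h2

lemma far1_swap {n : ℕ} (a b l : ℝ) (X Y : EuclideanSpace ℝ (Fin n) × ℝ) : far1 a b l X Y = far1 b a l Y X := by
  unfold far1
  rw [norm_sub_rev, mul_comm (X.2 ^ a), show ‖Y.1 - X.1‖ + X.2 + Y.2 = ‖Y.1 - X.1‖ + Y.2 + X.2 by ring]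

end PartA3

section PartA4
open MeasureTheory ENNReal

lemma measurable_ker {n : ℕ} (α β lam : ℝ) :
    Measurable (fun Z : (EuclideanSpace ℝ (Fin n) × ℝ) × (EuclideanSpace ℝ (Fin n) × ℝ) =>
      ker α β lam Z.1 Z.2) := by
  unfold ker hsDist; fun_prop

lemma hls_norm (n : ℕ) {p q α β lam : ℝ} (hp : 0 < p) (hq : 0 < q) (hpq : p + q < 1)
    (hbal : (p + q) * ((n : ℝ) + 1) = α + β + lam) (hα : α < p) (hβ : β < q)
    (hαβ : 0 ≤ α + β) (hlam : 0 < lam) :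
    ∃ C : ℝ≥0∞, C ≠ ⊤ ∧ ∀ A B : EuclideanSpace ℝ (Fin n) × ℝ → ℝ≥0∞, Measurable A → Measurable B →
      (∀ X, A X ≠ ⊤) → (∀ X, B X ≠ ⊤) →
      ∫⁻ X in upperHalf n, A X ≤ 1 → ∫⁻ Y in upperHalf n, B Y ≤ 1 →
      ∫⁻ X in upperHalf n, ∫⁻ Y in upperHalf n, A X ^ (1 - p) * B Y ^ (1 - q) * ker α β lam X Y ≤ C := by
  obtain ⟨s, hs⟩ : ∃ s, s * (p + q) = 1 := ⟨(p + q)⁻¹, inv_mul_cancel₀ (by linarith)⟩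
  have hs0 : 0 < s := by
    by_contra hcon
    nlinarith
  obtain ⟨δ, hδ0, hδ⟩ : ∃ δ, 0 < δ ∧ δ < min p (min q (1 - p - q)) :=
    exists_between (lt_min hp (lt_min hq (by linarith)))
  simp only [lt_min_iff] at hδ
  have hnl : (n : ℝ) < s * lam := by
    have : (n : ℝ) * (p + q) < lam := by nlinarith
    nlinarith
  obtain ⟨C1, hC1, h1⟩ := near_int n hδ0
  have ex1 : s * (p + β) + s * lam - (n + 1) = s * (p - α) := by
    linear_combination (-s) * hbal + ((n : ℝ) + 1) * hs
  have ex2 : s * (q + α) + s * lam - (n + 1) = s * (q - β) := by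
    linear_combination (-s) * hbal + ((n : ℝ) + 1) * hs
  obtain ⟨C2, hC2, h2⟩ := far_int n (c := s * (p + β)) (l := s * lam) (by nlinarith) hnl
    (by have : 0 < s * (p - α) := mul_pos hs0 (by linarith)
        linarith)
  obtain ⟨C3, hC3, h3⟩ := far_int n (c := s * (q + α)) (l := s * lam) (by nlinarith) hnl
    (by have : 0 < s * (q - β) := mul_pos hs0 (by linarith)
        linarith)
  rw [ex1] at h2
  rw [ex2] at h3
  set K0 : ℝ := 2 ^ (|α| + |β|) + 5 ^ lam with hK0
  have hK0p : 0 < K0 := by positivity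
  refine ⟨ENNReal.ofReal K0 * (2 + (C1 + C2) + (C1 + C3)), ?_, ?_⟩
  · exact ENNReal.mul_ne_top ENNReal.ofReal_ne_top (by simp [*])
  intro A B hAm hBm hAt hBt hA1 hB1
  -- pointwise functions
  set F1 : (EuclideanSpace ℝ (Fin n) × ℝ) → (EuclideanSpace ℝ (Fin n) × ℝ) → ℝ≥0∞ := fun X Y =>
    A X * (ENNReal.ofReal (hPhi δ (A X).toReal (‖X - Y‖ ^ (-((n : ℝ) + 1)))) +
      ENNReal.ofReal (far1 (s * (p - α)) (- (s * (p + β))) (s * lam) X Y)) with hF1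
  set F2 : (EuclideanSpace ℝ (Fin n) × ℝ) → (EuclideanSpace ℝ (Fin n) × ℝ) → ℝ≥0∞ := fun X Y =>
    B Y * (ENNReal.ofReal (hPhi δ (B Y).toReal (‖X - Y‖ ^ (-((n : ℝ) + 1)))) +
      ENNReal.ofReal (far1 (- (s * (q + α))) (s * (q - β)) (s * lam) X Y)) with hF2
  have mF1 : Measurable (Function.uncurry F1) := by
    simp only [hF1, Function.uncurry_def]; unfold hPhi far1; fun_prop
  have mF2 : Measurable (Function.uncurry F2) := by
    simp only [hF2, Function.uncurry_def]; unfold hPhi far1; fun_prop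
  have hpt : ∀ X ∈ upperHalf n, ∀ Y ∈ upperHalf n, X ≠ Y →
      A X ^ (1 - p) * B Y ^ (1 - q) * ker α β lam X Y ≤
        ENNReal.ofReal K0 * (2 * (A X * B Y) + F1 X Y + F2 X Y) := by
    intro X hX Y hY hXY
    rcases eq_or_ne (A X) 0 with hA0 | hA0
    · rw [hA0, ENNReal.zero_rpow_of_pos (by linarith)]; simp
    rcases eq_or_ne (B Y) 0 with hB0 | hB0
    · rw [hB0, ENNReal.zero_rpow_of_pos (by linarith)]; simp
    obtain ⟨a, ha, hAa⟩ : ∃ a : ℝ, 0 < a ∧ A X = ENNReal.ofReal a :=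
      ⟨(A X).toReal, ENNReal.toReal_pos hA0 (hAt X), (ENNReal.ofReal_toReal (hAt X)).symm⟩
    obtain ⟨b, hb, hBb⟩ : ∃ a : ℝ, 0 < a ∧ B Y = ENNReal.ofReal a :=
      ⟨(B Y).toReal, ENNReal.toReal_pos hB0 (hBt Y), (ENNReal.ofReal_toReal (hBt Y)).symm⟩
    have := hls_pointwise (n := n) (X := X) (Y := Y) hp hq hpq hs hbal hδ0 hδ.1.le hδ.2.1.le hδ.2.2.le hαβ hlam ha hb hX hY hXY
    have ht : 0 < X.2 := hX
    have hz : 0 < Y.2 := hY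
    have f1 : ∀ x y l, 0 ≤ far1 x y l X Y := fun x y l => by unfold far1; positivity
    have f2 : ∀ a : ℝ, 0 < a → 0 ≤ hPhi δ a (‖X - Y‖ ^ (-((n : ℝ) + 1))) :=
      fun a ha => hPhi_nonneg ha.le (by positivity)
    rw [ker_eq_ofReal _ _ _ hX hY hXY]
    simp only [hF1, hF2, hAa, hBb, ENNReal.toReal_ofReal ha.le, ENNReal.toReal_ofReal hb.le]
    rw [ENNReal.ofReal_rpow_of_pos ha, ENNReal.ofReal_rpow_of_pos hb, ← ENNReal.ofReal_mul (by positivity),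
      ← ENNReal.ofReal_mul (by positivity)]
    refine (ENNReal.ofReal_le_ofReal this).trans (le_of_eq ?_)
    have h2e : (2:ℝ≥0∞) * ENNReal.ofReal (a*b) = ENNReal.ofReal (2*(a*b)) := by
      rw [ENNReal.ofReal_mul (by norm_num : (0:ℝ) ≤ 2)]; simp
    rw [← ENNReal.ofReal_add (f2 a ha) (f1 _ _ _), ← ENNReal.ofReal_add (f2 b hb) (f1 _ _ _),
      ← ENNReal.ofReal_mul ha.le, ← ENNReal.ofReal_mul hb.le, ← ENNReal.ofReal_mul ha.le,
      h2e,
      ← ENNReal.ofReal_add, ← ENNReal.ofReal_add, ← ENNReal.ofReal_mul hK0p.le]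
    · congr 1; ring
    · have := f1 (s * (p - α)) (- (s * (p + β))) (s * lam)
      have := f2 a ha
      positivity
    · have := f1 (- (s * (q + α))) (s * (q - β)) (s * lam)
      have := f2 b hb
      positivity
    · positivity
    · have := f1 (s * (p - α)) (- (s * (p + β))) (s * lam)
      have := f2 a ha
      positivity
  have hstep : ∫⁻ X in upperHalf n, ∫⁻ Y in upperHalf n, A X ^ (1 - p) * B Y ^ (1 - q) * ker α β lam X Y ≤
      ∫⁻ X in upperHalf n, ∫⁻ Y in upperHalf n, ENNReal.ofReal K0 * (2 * (A X * B Y) + F1 X Y + F2 X Y) := by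
    refine setLIntegral_mono' (measurableSet_upperHalf n) fun X hX => ?_
    refine lintegral_mono_ae ?_
    have : ∀ᵐ Y ∂(volume.restrict (upperHalf n)), Y ≠ X :=
      ae_restrict_of_ae (by simp [ae_iff, measure_singleton])
    filter_upwards [this, ae_restrict_mem (measurableSet_upperHalf n)] with Y hY hYH
    exact hpt X hX Y hYH hY.symm
  refine hstep.trans ?_
  have m1 : ∀ X, Measurable (F1 X) := fun X => mF1.comp measurable_prodMk_left
  have m2 : ∀ X, Measurable (F2 X) := fun X => mF2.comp measurable_prodMk_left
  have hb1 : ∫⁻ X in upperHalf n, ∫⁻ Y in upperHalf n, F1 X Y ≤ C1 + C2 := by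
    calc _ ≤ ∫⁻ X in upperHalf n, A X * (C1 + C2) := by
          refine setLIntegral_mono' (measurableSet_upperHalf n) fun X hX => ?_
          simp only [hF1]
          rw [lintegral_const_mul' _ _ (hAt X)]
          rcases eq_or_ne (A X) 0 with hA0 | hA0
          · simp [hA0]
          gcongr
          rw [lintegral_add_right _ (by unfold far1; fun_prop)]
          gcongr
          · exact (lintegral_mono' Measure.restrict_le_self le_rfl).trans (h1 X _ (ENNReal.toReal_pos hA0 (hAt X)))
          · exact h2 X hX
      _ ≤ 1 * (C1 + C2) := by
          rw [lintegral_mul_const _ hAm]; gcongr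
      _ = _ := one_mul _
  have hb2 : ∫⁻ X in upperHalf n, ∫⁻ Y in upperHalf n, F2 X Y ≤ C1 + C3 := by
    rw [lintegral_lintegral_swap mF2.aemeasurable]
    calc _ ≤ ∫⁻ X in upperHalf n, B X * (C1 + C3) := by
          refine setLIntegral_mono' (measurableSet_upperHalf n) fun X hX => ?_
          simp only [hF2]
          rw [lintegral_const_mul' _ _ (hBt X)]
          rcases eq_or_ne (B X) 0 with hA0 | hA0
          · simp [hA0]
          gcongr
          rw [lintegral_add_right _ (by unfold far1; fun_prop)]
          gcongr
          · simp_rw [norm_sub_rev _ X]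
            exact (lintegral_mono' Measure.restrict_le_self le_rfl).trans (h1 X _ (ENNReal.toReal_pos hA0 (hBt X)))
          · simp_rw [fun Y => far1_swap (- (s * (q + α))) (s * (q - β)) (s * lam) Y X]
            exact h3 X hX
      _ ≤ 1 * (C1 + C3) := by
          rw [lintegral_mul_const _ hBm]; gcongr
      _ = _ := one_mul _
  have hb0 : ∫⁻ X in upperHalf n, ∫⁻ Y in upperHalf n, 2 * (A X * B Y) ≤ 2 := by
    simp_rw [← mul_assoc]
    simp_rw [fun X => lintegral_const_mul (μ := volume.restrict (upperHalf n)) (2 * A X) hBm]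
    rw [lintegral_mul_const _ (by fun_prop), lintegral_const_mul _ hAm]
    calc _ ≤ 2 * 1 * (1 : ℝ≥0∞) := by gcongr
      _ = 2 := by norm_num
  have expand : ∫⁻ X in upperHalf n, ∫⁻ Y in upperHalf n, ENNReal.ofReal K0 * (2 * (A X * B Y) + F1 X Y + F2 X Y)
      = ENNReal.ofReal K0 * ((∫⁻ X in upperHalf n, ∫⁻ Y in upperHalf n, 2 * (A X * B Y)) +
        (∫⁻ X in upperHalf n, ∫⁻ Y in upperHalf n, F1 X Y) + ∫⁻ X in upperHalf n, ∫⁻ Y in upperHalf n, F2 X Y) := by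
    simp_rw [fun X => lintegral_const_mul' (μ := volume.restrict (upperHalf n)) (ENNReal.ofReal K0)
      (fun Y => 2 * (A X * B Y) + F1 X Y + F2 X Y) ENNReal.ofReal_ne_top]
    rw [lintegral_const_mul' _ _ ENNReal.ofReal_ne_top]
    congr 1
    simp_rw [fun X => lintegral_add_right (μ := volume.restrict (upperHalf n)) (fun Y => 2 * (A X * B Y) + F1 X Y) (m2 X),
      fun X => lintegral_add_right (μ := volume.restrict (upperHalf n)) (fun Y => 2 * (A X * B Y)) (m1 X)]
    have q2 : Measurable fun X => ∫⁻ Y in upperHalf n, F2 X Y := mF2.lintegral_prod_right'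
    have q1 : Measurable fun X => ∫⁻ Y in upperHalf n, F1 X Y := mF1.lintegral_prod_right'
    rw [lintegral_add_right _ q2, lintegral_add_right _ q1]
  rw [expand]
  gcongr

lemma hls (n : ℕ) {p q α β lam : ℝ} (hp : 0 < p) (hq : 0 < q) (hpq : p + q < 1)
    (hbal : (p + q) * ((n : ℝ) + 1) = α + β + lam) (hα : α < p) (hβ : β < q)
    (hαβ : 0 ≤ α + β) (hlam : 0 < lam) :
    ∃ C : ℝ≥0∞, C ≠ ⊤ ∧ ∀ A B : EuclideanSpace ℝ (Fin n) × ℝ → ℝ≥0∞, Measurable A → Measurable B →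
      (∀ X, A X ≠ ⊤) → (∀ X, B X ≠ ⊤) →
      ∫⁻ X in upperHalf n, A X ≠ ⊤ → ∫⁻ Y in upperHalf n, B Y ≠ ⊤ →
      ∫⁻ X in upperHalf n, ∫⁻ Y in upperHalf n, A X ^ (1 - p) * B Y ^ (1 - q) * ker α β lam X Y ≤
        C * (∫⁻ X in upperHalf n, A X) ^ (1 - p) * (∫⁻ X in upperHalf n, B X) ^ (1 - q) := by
  obtain ⟨C, hC, h⟩ := hls_norm n hp hq hpq hbal hα hβ hαβ hlam
  refine ⟨C, hC, ?_⟩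
  intro A B hAm hBm hAt hBt hA1 hB1
  set a := ∫⁻ X in upperHalf n, A X with ha
  set b := ∫⁻ X in upperHalf n, B X with hb
  have hp1 : 0 < 1 - p := by linarith
  have hq1 : 0 < 1 - q := by linarith
  rcases eq_or_ne a 0 with ha0 | ha0
  · have : A =ᵐ[volume.restrict (upperHalf n)] 0 := (lintegral_eq_zero_iff hAm).1 ha0
    have h0 : ∫⁻ X in upperHalf n, ∫⁻ Y in upperHalf n, A X ^ (1 - p) * B Y ^ (1 - q) * ker α β lam X Y = 0 := by
      rw [lintegral_congr_ae (g := 0)]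
      · simp
      · filter_upwards [this] with X hX
        simp [hX, ENNReal.zero_rpow_of_pos hp1]
    rw [h0]; exact zero_le
  rcases eq_or_ne b 0 with hb0 | hb0
  · have : B =ᵐ[volume.restrict (upperHalf n)] 0 := (lintegral_eq_zero_iff hBm).1 hb0
    have h0 : ∫⁻ X in upperHalf n, ∫⁻ Y in upperHalf n, A X ^ (1 - p) * B Y ^ (1 - q) * ker α β lam X Y = 0 := by
      have : ∀ X, ∫⁻ Y in upperHalf n, A X ^ (1 - p) * B Y ^ (1 - q) * ker α β lam X Y = 0 := by
        intro X
        rw [lintegral_congr_ae (g := 0)]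
        · simp
        · filter_upwards [this] with X hX
          simp [hX, ENNReal.zero_rpow_of_pos hq1]
      simp [this]
    rw [h0]; exact zero_le
  have hai : a⁻¹ ≠ ⊤ := ENNReal.inv_ne_top.2 ha0
  have hbi : b⁻¹ ≠ ⊤ := ENNReal.inv_ne_top.2 hb0
  have := h (fun X => a⁻¹ * A X) (fun Y => b⁻¹ * B Y) (hAm.const_mul _) (hBm.const_mul _)
    (fun X => ENNReal.mul_ne_top hai (hAt X)) (fun X => ENNReal.mul_ne_top hbi (hBt X))
    (by rw [lintegral_const_mul' _ _ hai, ← ha, ENNReal.inv_mul_cancel ha0 hA1])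
    (by rw [lintegral_const_mul' _ _ hbi, ← hb, ENNReal.inv_mul_cancel hb0 hB1])
  have e : ∀ X Y, (a⁻¹ * A X) ^ (1 - p) * (b⁻¹ * B Y) ^ (1 - q) * ker α β lam X Y =
      ((a ^ (1 - p))⁻¹ * (b ^ (1 - q))⁻¹) * (A X ^ (1 - p) * B Y ^ (1 - q) * ker α β lam X Y) := by
    intro X Y
    rw [ENNReal.mul_rpow_of_nonneg _ _ hp1.le, ENNReal.mul_rpow_of_nonneg _ _ hq1.le,
      ENNReal.inv_rpow, ENNReal.inv_rpow]
    ring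
  have na : a ^ (1 - p) ≠ ⊤ := ENNReal.rpow_ne_top_of_nonneg hp1.le hA1
  have nb : b ^ (1 - q) ≠ ⊤ := ENNReal.rpow_ne_top_of_nonneg hq1.le hB1
  have na0 : a ^ (1 - p) ≠ 0 := by simp [ENNReal.rpow_eq_zero_iff, ha0, hA1]
  have nb0 : b ^ (1 - q) ≠ 0 := by simp [ENNReal.rpow_eq_zero_iff, hb0, hB1]
  have nn : (a ^ (1 - p))⁻¹ * (b ^ (1 - q))⁻¹ ≠ ⊤ :=
    ENNReal.mul_ne_top (ENNReal.inv_ne_top.2 na0) (ENNReal.inv_ne_top.2 nb0)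
  simp_rw [e, fun X => lintegral_const_mul' (μ := volume.restrict (upperHalf n)) _
    (fun Y => A X ^ (1 - p) * B Y ^ (1 - q) * ker α β lam X Y) nn] at this
  rw [lintegral_const_mul' _ _ nn, ← ENNReal.mul_inv (Or.inl na0) (Or.inl na), mul_comm,
    ← div_eq_mul_inv, ENNReal.div_le_iff (mul_ne_zero na0 nb0) (ENNReal.mul_ne_top na nb)] at this
  rw [mul_assoc]
  exact this

end PartA4

section PartB1
open MeasureTheory ENNReal

lemma ker_pos {n : ℕ} (α β : ℝ) {lam : ℝ} (hlam : 0 < lam) {X Y : EuclideanSpace ℝ (Fin n) × ℝ}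
    (hX : X ∈ upperHalf n) (hY : Y ∈ upperHalf n) : ker α β lam X Y ≠ 0 := by
  have h1 : 0 < X.2 := hX
  have h2 : 0 < Y.2 := hY
  unfold ker
  refine mul_ne_zero (mul_ne_zero ?_ ?_) ?_
  · simp; positivity
  · simp; positivity
  · simp [ENNReal.rpow_eq_zero_iff, hlam.le]

lemma ker_ne_top {n : ℕ} (α β lam : ℝ) {X Y : EuclideanSpace ℝ (Fin n) × ℝ}
    (hX : X ∈ upperHalf n) (hY : Y ∈ upperHalf n) (h : X ≠ Y) : ker α β lam X Y ≠ ⊤ := by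
  rw [ker_eq_ofReal α β lam hX hY h]; exact ENNReal.ofReal_ne_top

lemma measurable_ker_right {n : ℕ} (α β lam : ℝ) (X : EuclideanSpace ℝ (Fin n) × ℝ) :
    Measurable (fun Y => ker α β lam X Y) := by
  unfold ker hsDist; fun_prop

lemma measurable_ker_left {n : ℕ} (α β lam : ℝ) (X : EuclideanSpace ℝ (Fin n) × ℝ) :
    Measurable (fun Y => ker α β lam Y X) := by
  unfold ker hsDist; fun_prop

lemma ae_ne_restrict {n : ℕ} (X : EuclideanSpace ℝ (Fin n) × ℝ) :
    ∀ᵐ Y ∂(volume.restrict (upperHalf n)), X ≠ Y := by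
  have : ∀ᵐ Y ∂(volume.restrict (upperHalf n)), Y ≠ X :=
      ae_restrict_of_ae (by simp [ae_iff, measure_singleton])
  filter_upwards [this] with Y hY using hY.symm

lemma ae_mem_H (n : ℕ) : ∀ᵐ Y ∂(volume.restrict (upperHalf n)), Y ∈ upperHalf n :=
  ae_restrict_mem (measurableSet_upperHalf n)

lemma exists_meas_rep {n : ℕ} (α β : ℝ) {lam : ℝ} (hlam : 0 < lam)
    (f : EuclideanSpace ℝ (Fin n) × ℝ → ℝ≥0∞)
    (hf : ∀ X ∈ upperHalf n, ∫⁻ Y in upperHalf n, f Y * ker α β lam X Y ≠ ⊤) :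
    ∃ g : EuclideanSpace ℝ (Fin n) × ℝ → ℝ≥0∞, Measurable g ∧
      ∀ X ∈ upperHalf n, ∫⁻ Y in upperHalf n, f Y * ker α β lam X Y =
        ∫⁻ Y in upperHalf n, g Y * ker α β lam X Y := by
  set X0 : EuclideanSpace ℝ (Fin n) × ℝ := (0, 1) with hX0
  have hX0H : X0 ∈ upperHalf n := by simp [hX0, upperHalf]
  have key : ∀ X ∈ upperHalf n, ∃ g, Measurable g ∧ g ≤ f ∧ ∫⁻ Y in upperHalf n, f Y * ker α β lam X Y =
        ∫⁻ Y in upperHalf n, g Y * ker α β lam X Y := by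
    intro X hX
    obtain ⟨g0, hg0m, hg0le, hg0⟩ := exists_measurable_le_lintegral_eq (volume.restrict (upperHalf n))
      (fun Y => f Y * ker α β lam X Y)
    refine ⟨fun Y => g0 Y / ker α β lam X Y, hg0m.div (measurable_ker_right _ _ _ _), ?_, ?_⟩
    · intro Y; exact ENNReal.div_le_of_le_mul (hg0le Y)
    · rw [hg0]
      refine lintegral_congr_ae ?_
      filter_upwards [ae_ne_restrict X, ae_mem_H n] with Y h1 h2
      rw [ENNReal.div_mul_cancel (ker_pos α β hlam hX h2) (ker_ne_top α β lam hX h2 h1)]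
  obtain ⟨g, hgm, hgf, hg⟩ := key X0 hX0H
  refine ⟨g, hgm, fun X hX => ?_⟩
  obtain ⟨G, hGm, hGf, hG⟩ := key X hX
  have hmm : Measurable (fun Y => max (g Y) (G Y)) := hgm.max hGm
  have : (fun Y => g Y * ker α β lam X0 Y) =ᵐ[volume.restrict (upperHalf n)]
      fun Y => max (g Y) (G Y) * ker α β lam X0 Y := by
    refine ae_eq_of_ae_le_of_lintegral_le ?_ ?_ ?_ ?_
    · exact Filter.Eventually.of_forall fun Y => by dsimp only; gcongr; exact le_max_left _ _
    · rw [← hg]; exact hf X0 hX0H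
    · exact (hmm.mul (measurable_ker_right _ _ _ _)).aemeasurable
    · rw [← hg]
      refine lintegral_mono fun Y => ?_
      dsimp only
      gcongr
      exact max_le (hgf Y) (hGf Y)
  apply le_antisymm
  · rw [hG]
    refine lintegral_mono_ae ?_
    filter_upwards [this, ae_ne_restrict X0, ae_mem_H n] with Y h0 h1 h2
    rw [ENNReal.mul_left_inj (ker_pos α β hlam hX0H h2) (ker_ne_top α β lam hX0H h2 h1)] at h0
    gcongr
    rw [h0]; exact le_max_right _ _
  · refine lintegral_mono fun Y => ?_
    dsimp only
    gcongr
    exact hgf Y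

/-- the integral system in extended nonnegative form -/
structure Sys (n : ℕ) (lam κ θ α β : ℝ) (U V : EuclideanSpace ℝ (Fin n) × ℝ → ℝ≥0∞) : Prop where
  mU : Measurable U
  mV : Measurable V
  tU : ∀ X, U X ≠ ⊤
  tV : ∀ X, V X ≠ ⊤
  pU : ∀ X ∈ upperHalf n, U X ≠ 0
  pV : ∀ X ∈ upperHalf n, V X ≠ 0
  eqU : ∀ X ∈ upperHalf n, U X = ∫⁻ Y in upperHalf n, V Y ^ κ * ker α β lam X Y
  eqV : ∀ Y ∈ upperHalf n, V Y = ∫⁻ X in upperHalf n, U X ^ θ * ker α β lam X Y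
  iU : ∫⁻ X in upperHalf n, U X ^ (θ + 1) ≠ ⊤
  iV : ∫⁻ X in upperHalf n, V X ^ (κ + 1) ≠ ⊤

lemma Sys.swap {n : ℕ} {lam κ θ α β : ℝ} {U V : EuclideanSpace ℝ (Fin n) × ℝ → ℝ≥0∞}
    (h : Sys n lam κ θ α β U V) : Sys n lam θ κ β α V U where
  mU := h.mV
  mV := h.mU
  tU := h.tV
  tV := h.tU
  pU := h.pV
  pV := h.pU
  eqU X hX := by rw [h.eqV X hX]; simp_rw [fun Y => ker_swap α β lam Y X]
  eqV X hX := by rw [h.eqU X hX]; simp_rw [fun Y => ker_swap α β lam X Y]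
  iU := h.iV
  iV := h.iU

lemma energy_eq {n : ℕ} {lam κ θ α β : ℝ} (hκ : 0 < κ) (hθ : 0 < θ) {U V : EuclideanSpace ℝ (Fin n) × ℝ → ℝ≥0∞}
    (mU : Measurable U) (mV : Measurable V) (tU : ∀ X, U X ≠ ⊤) (tV : ∀ X, V X ≠ ⊤)
    (pU : ∀ X ∈ upperHalf n, U X ≠ 0) (pV : ∀ X ∈ upperHalf n, V X ≠ 0)
    (eqU : ∀ X ∈ upperHalf n, U X = ∫⁻ Y in upperHalf n, V Y ^ κ * ker α β lam X Y)
    (eqV : ∀ Y ∈ upperHalf n, V Y = ∫⁻ X in upperHalf n, U X ^ θ * ker α β lam X Y) :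
    ∫⁻ X in upperHalf n, U X ^ (θ + 1) = ∫⁻ X in upperHalf n, V X ^ (κ + 1) := by
  have e1 : ∫⁻ X in upperHalf n, U X ^ (θ + 1) =
      ∫⁻ X in upperHalf n, ∫⁻ Y in upperHalf n, U X ^ θ * V Y ^ κ * ker α β lam X Y := by
    refine setLIntegral_congr_fun (measurableSet_upperHalf n) fun X hX => ?_
    simp only [mul_assoc]
    rw [lintegral_const_mul' _ _ (ENNReal.rpow_ne_top_of_nonneg hθ.le (tU X)), ← eqU X hX,
      ENNReal.rpow_add _ _ (pU X hX) (tU X), ENNReal.rpow_one]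
  have e2 : ∫⁻ X in upperHalf n, V X ^ (κ + 1) =
      ∫⁻ Y in upperHalf n, ∫⁻ X in upperHalf n, U X ^ θ * V Y ^ κ * ker α β lam X Y := by
    refine setLIntegral_congr_fun (measurableSet_upperHalf n) fun Y hY => ?_
    have hh : ∀ X, U X ^ θ * V Y ^ κ * ker α β lam X Y = V Y ^ κ * (U X ^ θ * ker α β lam X Y) :=
      fun X => by ring
    simp only [hh]
    rw [lintegral_const_mul' _ _ (ENNReal.rpow_ne_top_of_nonneg hκ.le (tV Y)), ← eqV Y hY,
      ENNReal.rpow_add _ _ (pV Y hY) (tV Y), ENNReal.rpow_one]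
  rw [e1, e2, lintegral_lintegral_swap]
  have := measurable_ker (n := n) α β lam
  apply Measurable.aemeasurable
  simp only [Function.uncurry_def]
  fun_prop

lemma meas_pot {n : ℕ} {α β lam : ℝ} {g : EuclideanSpace ℝ (Fin n) × ℝ → ℝ≥0∞} (hg : Measurable g) :
    Measurable fun X => ∫⁻ Y in upperHalf n, g Y * ker α β lam X Y := by
  have := measurable_ker (n := n) α β lam
  apply Measurable.lintegral_prod_right'
    (f := fun Z : (EuclideanSpace ℝ (Fin n) × ℝ) × (EuclideanSpace ℝ (Fin n) × ℝ) => g Z.2 * ker α β lam Z.1 Z.2)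
  fun_prop

lemma pot_conv {n : ℕ} {α β lam κ : ℝ} {v : EuclideanSpace ℝ (Fin n) × ℝ → ℝ}
    (hv_pos : ∀ X ∈ upperHalf n, 0 < v X) (X : EuclideanSpace ℝ (Fin n) × ℝ) :
    ENNReal.ofReal (X.2 ^ (-α)) * ∫⁻ Y in upperHalf n,
          ENNReal.ofReal (v Y ^ κ) * ENNReal.ofReal (Y.2 ^ (-β)) *
            ENNReal.ofReal (hsDist X Y) ^ (-lam) =
      ∫⁻ Y in upperHalf n, (upperHalf n).indicator (fun Y => ENNReal.ofReal (v Y)) Y ^ κ * ker α β lam X Y := by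
  rw [← lintegral_const_mul' _ _ ENNReal.ofReal_ne_top]
  refine setLIntegral_congr_fun (measurableSet_upperHalf n) fun Y hY => ?_
  simp only [Set.indicator_of_mem hY]
  rw [ENNReal.ofReal_rpow_of_pos (hv_pos Y hY)]
  unfold ker; ring

lemma meas_of_pot {n : ℕ} {α β lam : ℝ} (hlam : 0 < lam) {U f : EuclideanSpace ℝ (Fin n) × ℝ → ℝ≥0∞}
    (tU : ∀ X, U X ≠ ⊤) (zU : ∀ X ∉ upperHalf n, U X = 0)
    (eqU : ∀ X ∈ upperHalf n, U X = ∫⁻ Y in upperHalf n, f Y * ker α β lam X Y) : Measurable U := by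
  obtain ⟨g, hgm, hg⟩ := exists_meas_rep (n := n) α β hlam f (fun X hX => by rw [← eqU X hX]; exact tU X)
  have : U = (upperHalf n).indicator fun X => ∫⁻ Y in upperHalf n, g Y * ker α β lam X Y := by
    ext X
    by_cases hX : X ∈ upperHalf n
    · rw [Set.indicator_of_mem hX, eqU X hX, hg X hX]
    · rw [Set.indicator_of_notMem hX, zU X hX]
  rw [this]
  exact (meas_pot hgm).indicator (measurableSet_upperHalf n)

lemma sys_of {n : ℕ} {lam κ θ α β : ℝ} (hlam : 0 < lam) (hκ : 0 < κ) (hθ : 0 < θ)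
    {u v : EuclideanSpace ℝ (Fin n) × ℝ → ℝ}
    (hu_pos : ∀ X ∈ upperHalf n, 0 < u X)
    (hv_pos : ∀ X ∈ upperHalf n, 0 < v X)
    (hu_eq : ∀ X ∈ upperHalf n,
      ENNReal.ofReal (u X) = ENNReal.ofReal (X.2 ^ (-α)) *
        ∫⁻ Y in upperHalf n,
          ENNReal.ofReal (v Y ^ κ) * ENNReal.ofReal (Y.2 ^ (-β)) *
            ENNReal.ofReal (hsDist X Y) ^ (-lam))
    (hv_eq : ∀ Y ∈ upperHalf n,
      ENNReal.ofReal (v Y) = ENNReal.ofReal (Y.2 ^ (-β)) *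
        ∫⁻ X in upperHalf n,
          ENNReal.ofReal (u X ^ θ) * ENNReal.ofReal (X.2 ^ (-α)) *
            ENNReal.ofReal (hsDist X Y) ^ (-lam))
    (hu_int : (∫⁻ X in upperHalf n, ENNReal.ofReal (u X ^ (θ + 1))) < ⊤) :
    Sys n lam κ θ α β ((upperHalf n).indicator (fun Y => ENNReal.ofReal (u Y)))
      ((upperHalf n).indicator (fun Y => ENNReal.ofReal (v Y))) := by
  set U := (upperHalf n).indicator (fun Y => ENNReal.ofReal (u Y)) with hU
  set V := (upperHalf n).indicator (fun Y => ENNReal.ofReal (v Y)) with hV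
  have tU : ∀ X, U X ≠ ⊤ := fun X => by
    by_cases hX : X ∈ upperHalf n <;> simp [hU, hX]
  have tV : ∀ X, V X ≠ ⊤ := fun X => by
    by_cases hX : X ∈ upperHalf n <;> simp [hV, hX]
  have pU : ∀ X ∈ upperHalf n, U X ≠ 0 := fun X hX => by
    simp [hU, hX, hu_pos X hX]
  have pV : ∀ X ∈ upperHalf n, V X ≠ 0 := fun X hX => by
    simp [hV, hX, hv_pos X hX]
  have eqU : ∀ X ∈ upperHalf n, U X = ∫⁻ Y in upperHalf n, V Y ^ κ * ker α β lam X Y := fun X hX => by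
    rw [← pot_conv hv_pos, ← hu_eq X hX, hU, Set.indicator_of_mem hX]
  have eqV' : ∀ X ∈ upperHalf n, V X = ∫⁻ Y in upperHalf n, U Y ^ θ * ker β α lam X Y := fun X hX => by
    rw [← pot_conv hu_pos, hV, Set.indicator_of_mem hX, hv_eq X hX]
    simp_rw [hsDist_comm X]
  have eqV : ∀ Y ∈ upperHalf n, V Y = ∫⁻ X in upperHalf n, U X ^ θ * ker α β lam X Y := fun X hX => by
    rw [eqV' X hX]; simp_rw [fun Y => ker_swap α β lam Y X]
  have mU : Measurable U := meas_of_pot hlam tU (fun X hX => by simp [hU, hX]) eqU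
  have mV : Measurable V := meas_of_pot hlam tV (fun X hX => by simp [hV, hX]) eqV'
  have iU : ∫⁻ X in upperHalf n, U X ^ (θ + 1) ≠ ⊤ := by
    refine ne_of_lt (lt_of_eq_of_lt ?_ hu_int)
    refine setLIntegral_congr_fun (measurableSet_upperHalf n) fun Y hY => ?_
    simp only [hU, Set.indicator_of_mem hY]
    rw [ENNReal.ofReal_rpow_of_pos (hu_pos Y hY)]
  exact ⟨mU, mV, tU, tV, pU, pV, eqU, eqV, iU, by rw [← energy_eq hκ hθ mU mV tU tV pU pV eqU eqV]; exact iU⟩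

end PartB1

section PartB2
open MeasureTheory ENNReal

lemma ker_tendsto {n : ℕ} (α β lam : ℝ) {X Y : EuclideanSpace ℝ (Fin n) × ℝ}
    (hX : X ∈ upperHalf n) (hY : Y ∈ upperHalf n) :
    Filter.Tendsto (fun Z => ker α β lam Z Y) (nhds X) (nhds (ker α β lam X Y)) := by
  have h1 : 0 < X.2 := hX
  have h2 : 0 < Y.2 := hY
  have p1 : 0 < X.2 ^ (-α) := by positivity
  have p2 : 0 < Y.2 ^ (-β) := by positivity
  unfold ker
  refine ENNReal.Tendsto.mul ?_ ?_ ?_ ?_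
  · refine ENNReal.Tendsto.mul_const ?_ ?_
    · apply ENNReal.tendsto_ofReal
      exact (continuous_snd.tendsto X).rpow_const (Or.inl h1.ne')
    · right; exact ENNReal.ofReal_ne_top
  · left; exact mul_ne_zero (by simp [p1]) (by simp [p2])
  · apply (ENNReal.continuous_rpow_const.tendsto _).comp
    apply ENNReal.tendsto_ofReal
    unfold hsDist
    apply Continuous.tendsto
    fun_prop
  · right; exact ENNReal.mul_ne_top ENNReal.ofReal_ne_top ENNReal.ofReal_ne_top

lemma pot_lsc {n : ℕ} {α β lam : ℝ} (hlam : 0 < lam) {f : EuclideanSpace ℝ (Fin n) × ℝ → ℝ≥0∞}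
    (hf : Measurable f) {X : EuclideanSpace ℝ (Fin n) × ℝ} (hX : X ∈ upperHalf n) {c : ℝ≥0∞}
    (hc : c < ∫⁻ Y in upperHalf n, f Y * ker α β lam X Y) :
    ∀ᶠ Z in nhds X, c < ∫⁻ Y in upperHalf n, f Y * ker α β lam Z Y := by
  have h := lintegral_liminf_le (μ := volume.restrict (upperHalf n)) (u := nhds X)
    (f := fun Z Y => f Y * ker α β lam Z Y) (fun Z => hf.mul (measurable_ker_right α β lam Z))
  refine Filter.eventually_lt_of_lt_liminf (lt_of_lt_of_le hc (le_trans (le_of_eq ?_) h))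
  refine setLIntegral_congr_fun (measurableSet_upperHalf n) fun Y hY => ?_
  refine (Filter.Tendsto.liminf_eq ?_).symm
  exact ENNReal.Tendsto.const_mul (ker_tendsto α β lam hX hY) (Or.inl (ker_pos α β hlam hX hY))

lemma upperHalf_mem_nhds {n : ℕ} {X : EuclideanSpace ℝ (Fin n) × ℝ} (hX : X ∈ upperHalf n) :
    upperHalf n ∈ nhds X :=
  (isOpen_lt continuous_const continuous_snd).mem_nhds hX

lemma Sys.lscU {n : ℕ} {lam κ θ α β : ℝ} {U V : EuclideanSpace ℝ (Fin n) × ℝ → ℝ≥0∞} (hlam : 0 < lam)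
    (h : Sys n lam κ θ α β U V) {X : EuclideanSpace ℝ (Fin n) × ℝ} (hX : X ∈ upperHalf n)
    {c : ℝ≥0∞} (hc : c < U X) : ∀ᶠ Z in nhds X, c < U Z := by
  rw [h.eqU X hX] at hc
  filter_upwards [pot_lsc hlam (h.mV.pow_const κ) hX hc, upperHalf_mem_nhds hX] with Z h1 h2
  rw [h.eqU Z h2]; exact h1

lemma Sys.lscV {n : ℕ} {lam κ θ α β : ℝ} {U V : EuclideanSpace ℝ (Fin n) × ℝ → ℝ≥0∞} (hlam : 0 < lam)
    (h : Sys n lam κ θ α β U V) {X : EuclideanSpace ℝ (Fin n) × ℝ} (hX : X ∈ upperHalf n)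
    {c : ℝ≥0∞} (hc : c < V X) : ∀ᶠ Z in nhds X, c < V Z := h.swap.lscU hlam hX hc

end PartB2

section PartC1
open MeasureTheory ENNReal

/-- reflection in the hyperplane `⟪e,x⟫ = s` -/
def rho {n : ℕ} (e : EuclideanSpace ℝ (Fin n)) (s : ℝ) (X : EuclideanSpace ℝ (Fin n) × ℝ) :
    EuclideanSpace ℝ (Fin n) × ℝ := (X.1 - (2 * (inner ℝ e X.1 - s)) • e, X.2)

lemma inner_rho {n : ℕ} {e : EuclideanSpace ℝ (Fin n)} (he : ‖e‖ = 1) (s : ℝ)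
    (X : EuclideanSpace ℝ (Fin n) × ℝ) : inner ℝ e (rho e s X).1 = 2 * s - inner ℝ e X.1 := by
  simp only [rho, inner_sub_right, inner_smul_right, real_inner_self_eq_norm_sq, he]
  ring

lemma rho_rho {n : ℕ} {e : EuclideanSpace ℝ (Fin n)} (he : ‖e‖ = 1) (s : ℝ)
    (X : EuclideanSpace ℝ (Fin n) × ℝ) : rho e s (rho e s X) = X := by
  have := inner_rho he s X
  ext1
  · rw [rho, this]
    simp only [rho]
    module
  · rfl

lemma rho_snd {n : ℕ} (e : EuclideanSpace ℝ (Fin n)) (s : ℝ)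
    (X : EuclideanSpace ℝ (Fin n) × ℝ) : (rho e s X).2 = X.2 := rfl

lemma rho_mem {n : ℕ} (e : EuclideanSpace ℝ (Fin n)) (s : ℝ)
    {X : EuclideanSpace ℝ (Fin n) × ℝ} (hX : X ∈ upperHalf n) : rho e s X ∈ upperHalf n := hX

lemma rho_mem_iff {n : ℕ} (e : EuclideanSpace ℝ (Fin n)) (s : ℝ)
    {X : EuclideanSpace ℝ (Fin n) × ℝ} : rho e s X ∈ upperHalf n ↔ X ∈ upperHalf n := Iff.rfl

lemma norm_rho_sq {n : ℕ} {e : EuclideanSpace ℝ (Fin n)} (he : ‖e‖ = 1) (s : ℝ)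
    (X Y : EuclideanSpace ℝ (Fin n) × ℝ) : ‖X.1 - (rho e s Y).1‖ ^ 2 =
      ‖X.1 - Y.1‖ ^ 2 + 4 * (inner ℝ e X.1 - s) * (inner ℝ e Y.1 - s) := by
  have : X.1 - (rho e s Y).1 = (X.1 - Y.1) + (2 * (inner ℝ e Y.1 - s)) • e := by
    simp only [rho]; abel
  rw [this, norm_add_sq_real, inner_smul_right, norm_smul, mul_pow, he, real_inner_comm e (X.1 - Y.1), inner_sub_right,
    Real.norm_eq_abs, sq_abs]
  ring

lemma hsDist_rho_rho {n : ℕ} {e : EuclideanSpace ℝ (Fin n)} (he : ‖e‖ = 1) (s : ℝ)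
    (X Y : EuclideanSpace ℝ (Fin n) × ℝ) : hsDist (rho e s X) (rho e s Y) = hsDist X Y := by
  unfold hsDist
  rw [norm_rho_sq he, norm_sub_rev, norm_rho_sq he, norm_sub_rev, inner_rho he]
  simp only [rho_snd]
  congr 1
  ring

lemma hsDist_rho_le {n : ℕ} {e : EuclideanSpace ℝ (Fin n)} (he : ‖e‖ = 1) {s : ℝ}
    {X Y : EuclideanSpace ℝ (Fin n) × ℝ} (hX : s ≤ inner ℝ e X.1) (hY : s ≤ inner ℝ e Y.1) :
    hsDist X Y ≤ hsDist X (rho e s Y) := by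
  unfold hsDist
  apply Real.sqrt_le_sqrt
  rw [norm_rho_sq he, rho_snd]
  nlinarith

lemma hsDist_rho_lt {n : ℕ} {e : EuclideanSpace ℝ (Fin n)} (he : ‖e‖ = 1) {s : ℝ}
    {X Y : EuclideanSpace ℝ (Fin n) × ℝ} (hX : s < inner ℝ e X.1) (hY : s < inner ℝ e Y.1) :
    hsDist X Y < hsDist X (rho e s Y) := by
  unfold hsDist
  apply Real.sqrt_lt_sqrt (by positivity)
  rw [norm_rho_sq he, rho_snd]
  nlinarith

lemma ker_rho_rho {n : ℕ} {e : EuclideanSpace ℝ (Fin n)} (he : ‖e‖ = 1) (s : ℝ) (α β lam : ℝ)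
    (X Y : EuclideanSpace ℝ (Fin n) × ℝ) : ker α β lam (rho e s X) (rho e s Y) = ker α β lam X Y := by
  unfold ker; rw [hsDist_rho_rho he]; rfl

lemma ker_rho_comm {n : ℕ} {e : EuclideanSpace ℝ (Fin n)} (he : ‖e‖ = 1) (s : ℝ) (α β lam : ℝ)
    (X Y : EuclideanSpace ℝ (Fin n) × ℝ) : ker α β lam X (rho e s Y) = ker α β lam (rho e s X) Y := by
  rw [← ker_rho_rho he s, rho_rho he]

lemma ker_rho_le {n : ℕ} {e : EuclideanSpace ℝ (Fin n)} (he : ‖e‖ = 1) {s : ℝ} (α β : ℝ) {lam : ℝ}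
    (hlam : 0 < lam) {X Y : EuclideanSpace ℝ (Fin n) × ℝ} (hX : s ≤ inner ℝ e X.1) (hY : s ≤ inner ℝ e Y.1) :
    ker α β lam X (rho e s Y) ≤ ker α β lam X Y := by
  unfold ker
  rw [rho_snd]
  refine mul_le_mul_right ?_ _
  rw [ENNReal.rpow_neg, ENNReal.rpow_neg, ENNReal.inv_le_inv]
  exact ENNReal.rpow_le_rpow (ENNReal.ofReal_le_ofReal (hsDist_rho_le he hX hY)) hlam.le

lemma ker_rho_lt {n : ℕ} {e : EuclideanSpace ℝ (Fin n)} (he : ‖e‖ = 1) {s : ℝ} (α β : ℝ) {lam : ℝ}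
    (hlam : 0 < lam) {X Y : EuclideanSpace ℝ (Fin n) × ℝ} (hX : s < inner ℝ e X.1) (hY : s < inner ℝ e Y.1)
    (hXH : X ∈ upperHalf n) (hYH : Y ∈ upperHalf n) :
    ker α β lam X (rho e s Y) < ker α β lam X Y := by
  have h1 : 0 < X.2 := hXH
  have h2 : 0 < Y.2 := hYH
  have p1 : 0 < X.2 ^ (-α) := by positivity
  have p2 : 0 < Y.2 ^ (-β) := by positivity
  have := hsDist_rho_lt he hX hY
  have h0 := hsDist_nonneg X Y
  unfold ker
  rw [rho_snd]
  refine ENNReal.mul_lt_mul_right ?_ ?_ ?_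
  · exact mul_ne_zero (by simp [p1]) (by simp [p2])
  · exact ENNReal.mul_ne_top ENNReal.ofReal_ne_top ENNReal.ofReal_ne_top
  rw [ENNReal.rpow_neg, ENNReal.rpow_neg, ENNReal.inv_lt_inv]
  exact ENNReal.rpow_lt_rpow ((ENNReal.ofReal_lt_ofReal_iff (by linarith)).2 this) hlam

lemma continuous_rho {n : ℕ} (e : EuclideanSpace ℝ (Fin n)) (s : ℝ) : Continuous (rho e s) := by
  unfold rho; fun_prop

lemma mp_rho {n : ℕ} {e : EuclideanSpace ℝ (Fin n)} (he : ‖e‖ = 1) (s : ℝ) :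
    MeasurePreserving (rho e s) volume volume := by
  have h1 : MeasurePreserving (fun x : EuclideanSpace ℝ (Fin n) => x - (2 * (inner ℝ e x - s)) • e) volume volume := by
    have a := ((Submodule.span ℝ {e})ᗮ.reflection).measurePreserving
    have b := measurePreserving_add_right (volume : Measure (EuclideanSpace ℝ (Fin n))) ((2 * s) • e)
    have c := b.comp a
    have hfun : (fun x : EuclideanSpace ℝ (Fin n) => x - (2 * (inner ℝ e x - s)) • e) =
        (fun x => x + (2 * s) • e) ∘ (Submodule.span ℝ {e})ᗮ.reflection := ?_
    · rw [hfun]; exact c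
    funext x
    simp only [Function.comp]
    rw [Submodule.reflection_orthogonal_apply, Submodule.reflection_singleton_apply]
    simp only [he]
    norm_num
    module
  have h2 : MeasurePreserving (id : ℝ → ℝ) volume volume := MeasurePreserving.id _
  exact h1.prod h2

lemma mp_rho_H {n : ℕ} {e : EuclideanSpace ℝ (Fin n)} (he : ‖e‖ = 1) (s : ℝ) :
    MeasurePreserving (rho e s) (volume.restrict (upperHalf n)) (volume.restrict (upperHalf n)) :=
  (mp_rho he s).restrict_preimage (measurableSet_upperHalf n)

lemma lint_rho {n : ℕ} {e : EuclideanSpace ℝ (Fin n)} (he : ‖e‖ = 1) (s : ℝ)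
    {f : EuclideanSpace ℝ (Fin n) × ℝ → ℝ≥0∞} (hf : Measurable f) :
    ∫⁻ Y in upperHalf n, f (rho e s Y) = ∫⁻ Y in upperHalf n, f Y :=
  (mp_rho_H he s).lintegral_comp hf

lemma pot_rho {n : ℕ} {e : EuclideanSpace ℝ (Fin n)} (he : ‖e‖ = 1) (s : ℝ) (α β lam : ℝ)
    {f : EuclideanSpace ℝ (Fin n) × ℝ → ℝ≥0∞} (hf : Measurable f) (X : EuclideanSpace ℝ (Fin n) × ℝ) :
    ∫⁻ Y in upperHalf n, f (rho e s Y) * ker α β lam X Y =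
      ∫⁻ Y in upperHalf n, f Y * ker α β lam (rho e s X) Y := by
  have m : Measurable fun Y => f Y * ker α β lam (rho e s X) Y :=
    hf.mul (measurable_ker_right α β lam (rho e s X))
  rw [← lint_rho he s m]
  simp_rw [ker_rho_rho he]

lemma two_pot {n : ℕ} {e : EuclideanSpace ℝ (Fin n)} (he : ‖e‖ = 1) (s : ℝ) (α β lam : ℝ)
    {f : EuclideanSpace ℝ (Fin n) × ℝ → ℝ≥0∞} (hf : Measurable f) (X : EuclideanSpace ℝ (Fin n) × ℝ) :
    2 * ∫⁻ Y in upperHalf n, f Y * ker α β lam X Y =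
      ∫⁻ Y in upperHalf n, (f Y * ker α β lam X Y + f (rho e s Y) * ker α β lam X (rho e s Y)) := by
  have m : Measurable fun Y => f Y * ker α β lam X Y := hf.mul (measurable_ker_right α β lam X)
  rw [lintegral_add_left m, lint_rho he s m, two_mul]

lemma rearr {a b K K' : ℝ≥0∞} (hab : a ≤ b) (hK : K' ≤ K) : a * K + b * K' ≤ b * K + a * K' := by
  obtain ⟨d, rfl⟩ := exists_add_of_le hK
  calc a * (K' + d) + b * K' = a * K' + b * K' + a * d := by ring
    _ ≤ a * K' + b * K' + b * d := by gcongr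
    _ = _ := by ring

lemma rearr_eq {a b K K' : ℝ≥0∞} (ha : a ≠ ⊤) (hb : b ≠ ⊤) (hK : K' < K) (hKt : K ≠ ⊤)
    (h : a * K + b * K' = b * K + a * K') : a = b := by
  obtain ⟨d, rfl⟩ := exists_add_of_le hK.le
  have hK' : K' ≠ ⊤ := ne_top_of_lt hK
  have hd : d ≠ ⊤ := by
    rintro rfl; simp at hKt
  have hd0 : d ≠ 0 := by
    rintro rfl; simp at hK
  have h2 : (a * K' + b * K') + a * d = (a * K' + b * K') + b * d := by
    rw [show (a * K' + b * K') + a * d = a * (K' + d) + b * K' by ring, h]; ring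
  rw [ENNReal.add_right_inj (by simp [ENNReal.mul_eq_top, ha, hb, hK']), ENNReal.mul_left_inj hd0 hd] at h2
  exact h2

lemma polarize {n : ℕ} {e : EuclideanSpace ℝ (Fin n)} (he : ‖e‖ = 1) {s : ℝ} (α β : ℝ) {lam : ℝ} (hlam : 0 < lam)
    {F G : EuclideanSpace ℝ (Fin n) × ℝ → ℝ≥0∞} (hF : Measurable F) (hG : Measurable G)
    {X : EuclideanSpace ℝ (Fin n) × ℝ} (hX : s ≤ inner ℝ e X.1)
    (h : ∀ Y ∈ upperHalf n, s ≤ inner ℝ e Y.1 → F Y ≤ G Y ∧ F (rho e s Y) ≤ G Y ∧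
      min (F Y) (F (rho e s Y)) ≤ G (rho e s Y)) :
    ∫⁻ Y in upperHalf n, F Y * ker α β lam X Y ≤ ∫⁻ Y in upperHalf n, G Y * ker α β lam X Y := by
  have key : ∀ Y ∈ upperHalf n, s ≤ inner ℝ e Y.1 →
      F Y * ker α β lam X Y + F (rho e s Y) * ker α β lam X (rho e s Y) ≤
      G Y * ker α β lam X Y + G (rho e s Y) * ker α β lam X (rho e s Y) := by
    intro Y hY hs
    obtain ⟨h1, h2, h3⟩ := h Y hY hs
    rcases le_total (F Y) (F (rho e s Y)) with hc | hc
    · rw [min_eq_left hc] at h3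
      refine (rearr hc (ker_rho_le he α β hlam hX hs)).trans ?_
      gcongr
    · rw [min_eq_right hc] at h3
      gcongr
  rw [← ENNReal.mul_le_mul_iff_right (a := 2) (by norm_num) (by norm_num), two_pot he s α β lam hF, two_pot he s α β lam hG]
  refine setLIntegral_mono' (measurableSet_upperHalf n) fun Y hY => ?_
  rcases le_total s (inner ℝ e Y.1) with hs | hs
  · exact key Y hY hs
  · have := key (rho e s Y) (rho_mem e s hY) (by rw [inner_rho he]; linarith)
    rw [rho_rho he] at this
    rw [add_comm, add_comm (G Y * _)]; exact this

lemma polar_strict {n : ℕ} {e : EuclideanSpace ℝ (Fin n)} (he : ‖e‖ = 1) {s : ℝ} (α β : ℝ) {lam : ℝ} (hlam : 0 < lam)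
    {F : EuclideanSpace ℝ (Fin n) × ℝ → ℝ≥0∞} (hF : Measurable F) (hFt : ∀ Y, F Y ≠ ⊤)
    {X : EuclideanSpace ℝ (Fin n) × ℝ} (hXH : X ∈ upperHalf n) (hX : s < inner ℝ e X.1)
    (h : ∀ Y ∈ upperHalf n, s ≤ inner ℝ e Y.1 → F Y ≤ F (rho e s Y))
    (hfin : ∫⁻ Y in upperHalf n, F Y * ker α β lam X Y ≠ ⊤)
    (heq : ∫⁻ Y in upperHalf n, F Y * ker α β lam X Y = ∫⁻ Y in upperHalf n, F (rho e s Y) * ker α β lam X Y) :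
    ∀ᵐ Y ∂(volume.restrict (upperHalf n)), F Y = F (rho e s Y) := by
  have mr := (continuous_rho e s).measurable
  have mk := measurable_ker_right α β lam X
  have hle : ∀ Y ∈ upperHalf n, F Y * ker α β lam X Y + F (rho e s Y) * ker α β lam X (rho e s Y) ≤
      F (rho e s Y) * ker α β lam X Y + F Y * ker α β lam X (rho e s Y) := by
    intro Y hY
    rcases le_total s (inner ℝ e Y.1) with hs | hs
    · exact rearr (h Y hY hs) (ker_rho_le he α β hlam hX.le hs)
    · have hs' : s ≤ inner ℝ e (rho e s Y).1 := by rw [inner_rho he]; linarith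
      have a := h (rho e s Y) (rho_mem e s hY) hs'
      have b := ker_rho_le he α β hlam hX.le hs'
      rw [rho_rho he] at a b
      have := rearr a b
      rw [add_comm, add_comm (F (rho e s Y) * ker α β lam X Y)]; exact this
  have hr := two_pot he s α β lam (hF.comp mr) X
  simp only [Function.comp, rho_rho he] at hr
  have hl := two_pot he s α β lam hF X
  have hae := ae_eq_of_ae_le_of_lintegral_le (μ := volume.restrict (upperHalf n))
    ((ae_mem_H n).mono hle) (by rw [← hl]; exact ENNReal.mul_ne_top (by norm_num) hfin)
    (by fun_prop) (by rw [← hl, ← hr, heq])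
  have hne : ∀ᵐ Y ∂(volume.restrict (upperHalf n)), X ≠ rho e s Y := by
    filter_upwards [ae_ne_restrict (rho e s X)] with Y hY hc
    exact hY (by rw [hc, rho_rho he])
  filter_upwards [hae, ae_mem_H n, ae_ne_restrict X, hne] with Y h1 h2 h3 h4
  rcases lt_trichotomy s (inner ℝ e Y.1) with hs | hs | hs
  · exact rearr_eq (hFt _) (hFt _) (ker_rho_lt he α β hlam hX hs hXH h2) (ker_ne_top α β lam hXH h2 h3) h1
  · congr 1
    simp [rho, ← hs]
  · have hs' : s < inner ℝ e (rho e s Y).1 := by rw [inner_rho he]; linarith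
    have b := ker_rho_lt he α β hlam hX hs' hXH (rho_mem e s h2)
    rw [rho_rho he] at b
    refine (rearr_eq (hFt _) (hFt _) b (ker_ne_top α β lam hXH (rho_mem e s h2) h4) ?_).symm
    rw [add_comm, h1, add_comm]

end PartC1

section PartC2
open MeasureTheory ENNReal

/-- the moving plane comparison property -/
def PP {n : ℕ} (U V : EuclideanSpace ℝ (Fin n) × ℝ → ℝ≥0∞) (e : EuclideanSpace ℝ (Fin n)) (s : ℝ) : Prop :=
  ∀ X ∈ upperHalf n, s ≤ inner ℝ e X.1 → U X ≤ U (rho e s X) ∧ V X ≤ V (rho e s X)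

/-- symmetry about a hyperplane -/
def SymP {n : ℕ} (U V : EuclideanSpace ℝ (Fin n) × ℝ → ℝ≥0∞) (e : EuclideanSpace ℝ (Fin n)) (s : ℝ) : Prop :=
  ∀ X ∈ upperHalf n, U (rho e s X) = U X ∧ V (rho e s X) = V X

lemma Sys.eqUr {n : ℕ} {lam κ θ α β : ℝ} {U V : EuclideanSpace ℝ (Fin n) × ℝ → ℝ≥0∞}
    (h : Sys n lam κ θ α β U V) {e : EuclideanSpace ℝ (Fin n)} (he : ‖e‖ = 1) (s : ℝ)
    {X : EuclideanSpace ℝ (Fin n) × ℝ} (hX : X ∈ upperHalf n) :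
    U (rho e s X) = ∫⁻ Y in upperHalf n, V (rho e s Y) ^ κ * ker α β lam X Y := by
  rw [pot_rho he s α β lam (f := fun Y => V Y ^ κ) (h.mV.pow_const κ), h.eqU _ (rho_mem e s hX)]

lemma Sys.strict {n : ℕ} {lam κ θ α β : ℝ} {U V : EuclideanSpace ℝ (Fin n) × ℝ → ℝ≥0∞}
    (h : Sys n lam κ θ α β U V) (hlam : 0 < lam) (hκ : 0 < κ) {e : EuclideanSpace ℝ (Fin n)} (he : ‖e‖ = 1) {s : ℝ}
    (hP : PP U V e s) (hS : ¬ SymP U V e s)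
    {X : EuclideanSpace ℝ (Fin n) × ℝ} (hX : X ∈ upperHalf n) (hs : s < inner ℝ e X.1) :
    U X < U (rho e s X) := by
  refine lt_of_le_of_ne (hP X hX hs.le).1 fun heq => hS ?_
  have hae := polar_strict he α β hlam (F := fun Y => V Y ^ κ) (h.mV.pow_const κ)
    (fun Y => ENNReal.rpow_ne_top_of_nonneg hκ.le (h.tV Y)) hX hs
    (fun Y hY hs => ENNReal.rpow_le_rpow (hP Y hY hs).2 hκ.le)
    (by rw [← h.eqU X hX]; exact h.tU X) (by rw [← h.eqU X hX, ← h.eqUr he s hX]; exact heq)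
  have hU : ∀ Z ∈ upperHalf n, U (rho e s Z) = U Z := by
    intro Z hZ
    rw [h.eqUr he s hZ, h.eqU Z hZ]
    refine lintegral_congr_ae ?_
    filter_upwards [hae] with Y hY
    rw [hY]
  intro Z hZ
  refine ⟨hU Z hZ, ?_⟩
  rw [h.swap.eqUr he s hZ, h.swap.eqU Z hZ]
  refine lintegral_congr_ae ?_
  filter_upwards [ae_mem_H n] with Y hY
  rw [hU Y hY]

lemma bern_real {a b j : ℝ} (ha : 0 < a) (hb : 0 ≤ b) (hj : 1 ≤ j) :
    a ^ j - b ^ j ≤ j * a ^ (j - 1) * (a - b) := by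
  have h := one_add_mul_self_le_rpow_one_add (s := b / a - 1) (by have : 0 ≤ b / a := by positivity
                                                                  linarith) hj
  rw [show 1 + (b / a - 1) = b / a by ring, Real.div_rpow hb ha.le, le_div_iff₀ (by positivity)] at h
  have e1 : a ^ j = a ^ (j - 1) * a := by
    rw [Real.rpow_sub_one ha.ne']; field_simp
  have e2 : (1 + j * (b / a - 1)) * (a ^ (j - 1) * a) = a ^ (j - 1) * a - j * a ^ (j - 1) * (a - b) := by
    field_simp; ring
  rw [e1] at h ⊢
  linarith

lemma bern {a b : ℝ≥0∞} {j : ℝ} (ha : a ≠ ⊤) (hj : 1 ≤ j) :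
    a ^ j - b ^ j ≤ ENNReal.ofReal j * a ^ (j - 1) * (a - b) := by
  rcases le_or_gt a b with hab | hab
  · rw [tsub_eq_zero_of_le (ENNReal.rpow_le_rpow hab (by linarith))]; exact zero_le
  have hb : b ≠ ⊤ := ne_top_of_lt hab
  lift a to NNReal using ha
  lift b to NNReal using hb
  have hab' : b < a := by exact_mod_cast hab
  have ha0 : (0 : ℝ) < a := lt_of_le_of_lt b.coe_nonneg (by exact_mod_cast hab')
  have := bern_real ha0 b.coe_nonneg hj
  rw [tsub_le_iff_right]
  rw [show (a : ℝ≥0∞) = ENNReal.ofReal a by simp, show (b : ℝ≥0∞) = ENNReal.ofReal b by simp,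
    ENNReal.ofReal_rpow_of_pos ha0, ENNReal.ofReal_rpow_of_pos ha0,
    ENNReal.ofReal_rpow_of_nonneg b.coe_nonneg (by linarith), ← ENNReal.ofReal_sub _ b.coe_nonneg,
    ← ENNReal.ofReal_mul (by linarith), ← ENNReal.ofReal_mul (by positivity), ← ENNReal.ofReal_add]
  · apply ENNReal.ofReal_le_ofReal; linarith
  · have : (0 : ℝ) ≤ a - b := sub_nonneg.2 (by exact_mod_cast hab'.le)
    positivity
  · exact Real.rpow_nonneg b.coe_nonneg _

lemma holder_step {Ω : Type*} [MeasurableSpace Ω] {μ : Measure Ω} {a f g : Ω → ℝ≥0∞} {j r : ℝ}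
    (hj : 1 ≤ j) (hr : 0 < r) (hf : Measurable f) (hg : Measurable g)
    (h : ∀ᵐ x ∂μ, a x ≤ ENNReal.ofReal j * f x ^ (j - 1) * g x) :
    ∫⁻ x, a x ^ (r / j) ∂μ ≤ ENNReal.ofReal j ^ (r / j) *
      ((∫⁻ x, f x ^ r ∂μ) ^ (1 - 1 / j) * (∫⁻ x, g x ^ r ∂μ) ^ (1 / j)) := by
  have hj0 : 0 < j := by linarith
  have hq : 0 ≤ 1 - 1 / j := by rw [sub_nonneg, div_le_one hj0]; exact hj
  calc ∫⁻ x, a x ^ (r / j) ∂μ ≤ ∫⁻ x, ENNReal.ofReal j ^ (r / j) * ((f x ^ r) ^ (1 - 1 / j) * (g x ^ r) ^ (1 / j)) ∂μ := by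
        refine lintegral_mono_ae ?_
        filter_upwards [h] with x hx
        refine (ENNReal.rpow_le_rpow hx (by positivity)).trans (le_of_eq ?_)
        rw [ENNReal.mul_rpow_of_nonneg _ _ (by positivity), ENNReal.mul_rpow_of_nonneg _ _ (by positivity),
          ← ENNReal.rpow_mul, ← ENNReal.rpow_mul, ← ENNReal.rpow_mul, mul_assoc,
          show (j - 1) * (r / j) = r * (1 - 1 / j) by field_simp, show r / j = r * (1 / j) by ring]
    _ = ENNReal.ofReal j ^ (r / j) * ∫⁻ x, (f x ^ r) ^ (1 - 1 / j) * (g x ^ r) ^ (1 / j) ∂μ := by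
        rw [lintegral_const_mul' _ _ (ENNReal.rpow_ne_top_of_nonneg (by positivity) ENNReal.ofReal_ne_top)]
    _ ≤ _ := by
        gcongr
        exact ENNReal.lintegral_mul_norm_pow_le (hf.pow_const r).aemeasurable (hg.pow_const r).aemeasurable hq
          (by positivity) (by ring)

/-- the operator bound from Hardy–Littlewood–Sobolev -/
lemma opbound (n : ℕ) {κ θ α β lam : ℝ} (hκ : 0 < κ) (hθ : 0 < θ) (hκθ : 1 < κ * θ)
    (hα : α < 1 / (θ + 1)) (hβ : β < 1 / (κ + 1)) (hαβ : 0 ≤ α + β) (hlam : 0 < lam)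
    (hbal : 1 / (θ + 1) + 1 / (κ + 1) = (α + β + lam) / ((n : ℝ) + 1)) :
    ∃ C : ℝ≥0∞, C ≠ ⊤ ∧ ∀ w h : EuclideanSpace ℝ (Fin n) × ℝ → ℝ≥0∞, Measurable w → Measurable h →
      (∀ X, w X ≠ ⊤) → (∀ X, h X ≠ ⊤) →
      (∀ X ∈ upperHalf n, w X ≤ ∫⁻ Y in upperHalf n, h Y * ker α β lam X Y) →
      ∫⁻ X in upperHalf n, w X ^ (θ + 1) ≠ ⊤ → ∫⁻ Y in upperHalf n, h Y ^ ((κ + 1) / κ) ≠ ⊤ →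
      (∫⁻ X in upperHalf n, w X ^ (θ + 1)) ^ (1 / (θ + 1)) ≤
        C * (∫⁻ Y in upperHalf n, h Y ^ ((κ + 1) / κ)) ^ (κ / (κ + 1)) := by
  have hp : 0 < 1 / (θ + 1) := by positivity
  have hq : 0 < 1 / (κ + 1) := by positivity
  have e1 : 1 - 1 / (θ + 1) = θ / (θ + 1) := by field_simp; ring
  have e2 : 1 - 1 / (κ + 1) = κ / (κ + 1) := by field_simp; ring
  have hpq : 1 / (θ + 1) + 1 / (κ + 1) < 1 := by
    have : 1 / (θ + 1) < κ / (κ + 1) := by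
      rw [div_lt_div_iff₀ (by positivity) (by positivity)]; nlinarith
    linarith
  obtain ⟨C, hC, H⟩ := hls n hp hq hpq (by rw [hbal]; field_simp) hα hβ hαβ hlam
  refine ⟨C, hC, ?_⟩
  intro w h mw mh tw th hwh iw ih
  have H1 := H (fun X => w X ^ (θ + 1)) (fun X => h X ^ ((κ + 1) / κ)) (mw.pow_const _) (mh.pow_const _)
    (fun X => ENNReal.rpow_ne_top_of_nonneg (by positivity) (tw X))
    (fun X => ENNReal.rpow_ne_top_of_nonneg (by positivity) (th X)) iw ih
  set W := ∫⁻ X in upperHalf n, w X ^ (θ + 1) with hW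
  set Hh := ∫⁻ Y in upperHalf n, h Y ^ ((κ + 1) / κ) with hHh
  have hle : W ≤ C * W ^ (θ / (θ + 1)) * Hh ^ (κ / (κ + 1)) := by
    rw [e1, e2] at H1
    refine le_trans ?_ H1
    refine setLIntegral_mono' (measurableSet_upperHalf n) fun X hX => ?_
    have e : ∀ Y, (w X ^ (θ + 1)) ^ (θ / (θ + 1)) * (h Y ^ ((κ + 1) / κ)) ^ (κ / (κ + 1)) * ker α β lam X Y =
        w X ^ θ * (h Y * ker α β lam X Y) := by
      intro Y
      rw [← ENNReal.rpow_mul, ← ENNReal.rpow_mul, show (θ + 1) * (θ / (θ + 1)) = θ by field_simp,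
        show (κ + 1) / κ * (κ / (κ + 1)) = 1 by field_simp, ENNReal.rpow_one, mul_assoc]
    simp only [e]
    rw [lintegral_const_mul' _ _ (ENNReal.rpow_ne_top_of_nonneg hθ.le (tw X)),
      ENNReal.rpow_add_of_nonneg _ _ hθ.le zero_le_one, ENNReal.rpow_one]
    gcongr
    exact hwh X hX
  rcases eq_or_ne W 0 with hW0 | hW0
  · rw [hW0, ENNReal.zero_rpow_of_pos hp]; exact zero_le
  have hne0 : W ^ (θ / (θ + 1)) ≠ 0 := by simp [ENNReal.rpow_eq_zero_iff, hW0, iw]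
  have hnet : W ^ (θ / (θ + 1)) ≠ ⊤ := ENNReal.rpow_ne_top_of_nonneg (by positivity) iw
  rw [← ENNReal.mul_le_mul_iff_right hne0 hnet]
  calc W ^ (θ / (θ + 1)) * W ^ (1 / (θ + 1)) = W := by
        rw [← ENNReal.rpow_add _ _ hW0 iw, show θ / (θ + 1) + 1 / (θ + 1) = 1 by field_simp, ENNReal.rpow_one]
    _ ≤ _ := hle
    _ = _ := by ring

end PartC2

section PartD1
open MeasureTheory ENNReal

open Classical in
/-- truncated difference of powers on the half space -/
def df {n : ℕ} (f : EuclideanSpace ℝ (Fin n) × ℝ → ℝ≥0∞) (j : ℝ) (e : EuclideanSpace ℝ (Fin n)) (s : ℝ)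
    (X : EuclideanSpace ℝ (Fin n) × ℝ) : ℝ≥0∞ :=
  if s ≤ inner ℝ e X.1 then f X ^ j - f (rho e s X) ^ j else 0

/-- the bad set -/
def Bset {n : ℕ} (f : EuclideanSpace ℝ (Fin n) × ℝ → ℝ≥0∞) (e : EuclideanSpace ℝ (Fin n)) (s : ℝ) :
    Set (EuclideanSpace ℝ (Fin n) × ℝ) := {X | s ≤ inner ℝ e X.1 ∧ f (rho e s X) < f X}

lemma df_le {n : ℕ} (f : EuclideanSpace ℝ (Fin n) × ℝ → ℝ≥0∞) (j : ℝ) (e : EuclideanSpace ℝ (Fin n)) (s : ℝ)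
    (X : EuclideanSpace ℝ (Fin n) × ℝ) : df f j e s X ≤ f X ^ j := by
  unfold df; split_ifs
  · exact tsub_le_self
  · exact zero_le

lemma measurableSet_half {n : ℕ} (e : EuclideanSpace ℝ (Fin n)) (s : ℝ) :
    MeasurableSet {X : EuclideanSpace ℝ (Fin n) × ℝ | s ≤ inner ℝ e X.1} := by
  apply IsClosed.measurableSet
  exact isClosed_le continuous_const (by fun_prop)

lemma measurable_comp_rho {n : ℕ} {f : EuclideanSpace ℝ (Fin n) × ℝ → ℝ≥0∞} (hf : Measurable f)
    (e : EuclideanSpace ℝ (Fin n)) (s : ℝ) : Measurable fun X => f (rho e s X) :=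
  hf.comp (continuous_rho e s).measurable

lemma measurable_df {n : ℕ} {f : EuclideanSpace ℝ (Fin n) × ℝ → ℝ≥0∞} (hf : Measurable f) (j : ℝ)
    (e : EuclideanSpace ℝ (Fin n)) (s : ℝ) : Measurable (df f j e s) := by
  unfold df
  exact Measurable.ite (measurableSet_half e s)
    ((hf.pow_const j).sub ((measurable_comp_rho hf e s).pow_const j)) measurable_const

lemma measurableSet_Bset {n : ℕ} {f : EuclideanSpace ℝ (Fin n) × ℝ → ℝ≥0∞} (hf : Measurable f)
    (e : EuclideanSpace ℝ (Fin n)) (s : ℝ) : MeasurableSet (Bset f e s) :=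
  (measurableSet_half e s).inter (measurableSet_lt (measurable_comp_rho hf e s) hf)

lemma Sys.dstep {n : ℕ} {lam κ θ α β : ℝ} {U V : EuclideanSpace ℝ (Fin n) × ℝ → ℝ≥0∞}
    (h : Sys n lam κ θ α β U V) (hlam : 0 < lam) (hκ : 0 < κ) {m : ℝ} (hm : 1 ≤ m)
    {e : EuclideanSpace ℝ (Fin n)} (he : ‖e‖ = 1) (s : ℝ)
    {X : EuclideanSpace ℝ (Fin n) × ℝ} (hX : X ∈ upperHalf n) :
    df U (1 / m) e s X ^ m ≤ ∫⁻ Y in upperHalf n, df V (κ / m) e s Y ^ m * ker α β lam X Y := by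
  have hm0 : 0 < m := by linarith
  by_cases hs : s ≤ inner ℝ e X.1
  swap
  · rw [df, if_neg hs, ENNReal.zero_rpow_of_pos hm0]; exact zero_le
  have mk := measurable_ker_right α β lam X
  have mVr := measurable_comp_rho h.mV e s
  have md := measurable_df h.mV (κ / m) e s
  have hpow : ∀ a : ℝ≥0∞, (a ^ (κ / m)) ^ m = a ^ κ := fun a => by
    rw [← ENNReal.rpow_mul]; congr 1; field_simp
  have hpow1 : ∀ a : ℝ≥0∞, (a ^ (1 / m)) ^ m = a := fun a => by
    rw [← ENNReal.rpow_mul, one_div_mul_cancel hm0.ne', ENNReal.rpow_one]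
  have h1 : U X ≤ ∫⁻ Y in upperHalf n, (V (rho e s Y) ^ (κ / m) + df V (κ / m) e s Y) ^ m * ker α β lam X Y := by
    rw [h.eqU X hX]
    have mG : Measurable fun Y => (V (rho e s Y) ^ (κ / m) + df V (κ / m) e s Y) ^ m :=
      ((mVr.pow_const _).add md).pow_const m
    have mF : Measurable fun Y => V Y ^ κ := h.mV.pow_const κ
    refine polarize he α β hlam mF mG hs ?_
    intro Y hY hsY
    refine ⟨?_, ?_, ?_⟩
    · rw [← hpow]
      refine ENNReal.rpow_le_rpow ?_ hm0.le
      rw [df, if_pos hsY]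
      exact le_add_tsub
    · rw [← hpow]
      exact ENNReal.rpow_le_rpow le_self_add hm0.le
    · refine (min_le_left _ _).trans ?_
      rw [rho_rho he, ← hpow]
      exact ENNReal.rpow_le_rpow le_self_add hm0.le
  have h2 := ENNReal.lintegral_Lp_add_le (μ := volume.restrict (upperHalf n)) (p := m)
    (f := fun Y => V (rho e s Y) ^ (κ / m) * ker α β lam X Y ^ (1 / m))
    (g := fun Y => df V (κ / m) e s Y * ker α β lam X Y ^ (1 / m)) 
    ((mVr.pow_const _).mul (mk.pow_const _)).aemeasurable (md.mul (mk.pow_const _)).aemeasurable hm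
  simp only [Pi.add_apply, ← add_mul, ENNReal.mul_rpow_of_nonneg _ _ hm0.le, hpow1, hpow] at h2
  rw [← h.eqUr he s hX] at h2
  have h3 : df U (1 / m) e s X ≤ (∫⁻ Y in upperHalf n, df V (κ / m) e s Y ^ m * ker α β lam X Y) ^ (1 / m) := by
    rw [df, if_pos hs, tsub_le_iff_left]
    exact (ENNReal.rpow_le_rpow h1 (by positivity)).trans h2
  calc _ ≤ _ := ENNReal.rpow_le_rpow h3 hm0.le
    _ = _ := hpow1 _

lemma Sys.key {n : ℕ} {lam κ θ α β : ℝ} {U V : EuclideanSpace ℝ (Fin n) × ℝ → ℝ≥0∞}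
    (h : Sys n lam κ θ α β U V) (hlam : 0 < lam) (hκ : 0 < κ) (hθ : 1 < θ) (hκθ : 1 < κ * θ)
    (hα : α < 1 / (θ + 1)) (hβ : β < 1 / (κ + 1)) (hαβ : 0 ≤ α + β)
    (hbal : 1 / (θ + 1) + 1 / (κ + 1) = (α + β + lam) / ((n : ℝ) + 1)) :
    ∃ ε : ℝ≥0∞, 0 < ε ∧ ∀ (e : EuclideanSpace ℝ (Fin n)) (s : ℝ), ‖e‖ = 1 →
      ∫⁻ X in upperHalf n, (Bset U e s).indicator U X ^ (θ + 1) < ε → PP U V e s := by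
  have hθ0 : 0 < θ := by linarith
  obtain ⟨C1, hC1, H1⟩ := opbound n hκ hθ0 hκθ hα hβ hαβ hlam hbal
  obtain ⟨C2, hC2, H2⟩ := opbound n hθ0 hκ (by linarith) hβ hα (by linarith) hlam
    (by rw [add_comm, hbal, add_comm α])
  obtain ⟨m, hm1, hκm, hmθ⟩ : ∃ m : ℝ, 1 ≤ m ∧ 1 ≤ κ * m ∧ m < θ := by
    refine ⟨max 1 (1 / κ), le_max_left _ _, ?_, max_lt hθ ?_⟩
    · calc 1 = κ * (1 / κ) := by field_simp
        _ ≤ _ := by gcongr; exact le_max_right _ _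
    · rw [div_lt_iff₀ hκ]; linarith
  have hm0 : 0 < m := by linarith
  set j := κ * m with hj
  set j' := θ / m with hj'
  have hj0 : 0 < j := by positivity
  have hj'0 : 0 < j' := by positivity
  have hj'1 : 1 < j' := by rw [hj', lt_div_iff₀ hm0]; linarith
  set IV := ∫⁻ X in upperHalf n, V X ^ (κ + 1) with hIV
  set c1 := ENNReal.ofReal j ^ ((m * (κ + 1)) / j) with hc1
  set c2 := ENNReal.ofReal j' ^ ((θ + 1) / j') with hc2
  -- the constants
  set a1 : ℝ := κ / (κ + 1) with ha1
  set a2 : ℝ := θ / (θ + 1) with ha2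
  have hq1 : 0 ≤ 1 - 1 / j := by rw [sub_nonneg, div_le_one hj0]; exact hκm
  have hq2 : 0 < 1 - 1 / j' := by rw [sub_pos, div_lt_one hj'0]; exact hj'1
  set M := C1 * (c1 * (IV ^ (1 - 1 / j) * (C2 * c2 ^ a2) ^ ((κ + 1) * (1 / j)))) ^ a1 with hM
  set η : ℝ := (1 - 1 / j') * a2 * ((κ + 1) * (1 / j)) * a1 with hη
  have ha1p : 0 < a1 := by positivity
  have ha2p : 0 < a2 := by positivity
  have hηp : 0 < η := by positivity
  have hc1t : c1 ≠ ⊤ := ENNReal.rpow_ne_top_of_nonneg (by positivity) ENNReal.ofReal_ne_top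
  have hc2t : c2 ≠ ⊤ := ENNReal.rpow_ne_top_of_nonneg (by positivity) ENNReal.ofReal_ne_top
  have hMt : M ≠ ⊤ := by
    refine ENNReal.mul_ne_top hC1 (ENNReal.rpow_ne_top_of_nonneg ha1p.le ?_)
    refine ENNReal.mul_ne_top hc1t (ENNReal.mul_ne_top (ENNReal.rpow_ne_top_of_nonneg hq1 h.iV) ?_)
    exact ENNReal.rpow_ne_top_of_nonneg (by positivity) (ENNReal.mul_ne_top hC2
      (ENNReal.rpow_ne_top_of_nonneg ha2p.le hc2t))
  have hlim : Filter.Tendsto (fun x : ℝ≥0∞ => M * x ^ η) (nhds 0) (nhds (M * 0 ^ η)) :=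
    ENNReal.Tendsto.const_mul (ENNReal.continuous_rpow_const.tendsto _) (Or.inr hMt)
  rw [ENNReal.zero_rpow_of_pos hηp, mul_zero] at hlim
  obtain ⟨ε, hε, hε1⟩ := (ENNReal.nhds_zero_basis.eventually_iff).1 (hlim.eventually_lt_const one_pos)
  refine ⟨ε, hε, fun e s he hIB => ?_⟩
  have hIBs := hε1 (show _ ∈ Set.Iio ε from hIB)
  set IB := ∫⁻ X in upperHalf n, (Bset U e s).indicator U X ^ (θ + 1) with hIBdef
  have mw := measurable_df h.mU 1 e s
  have mh := measurable_df h.mV κ e s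
  have md := measurable_df h.mU (θ / m) e s
  have me := measurable_df h.mV (1 / m) e s
  have tdf : ∀ f : EuclideanSpace ℝ (Fin n) × ℝ → ℝ≥0∞, (∀ X, f X ≠ ⊤) → ∀ a : ℝ, 0 ≤ a → ∀ X, df f a e s X ≠ ⊤ :=
    fun f hf a ha X => ne_top_of_le_ne_top (ENNReal.rpow_ne_top_of_nonneg ha (hf X)) (df_le f a e s X)
  have hw : ∀ X ∈ upperHalf n, df U 1 e s X ≤ ∫⁻ Y in upperHalf n, df V κ e s Y * ker α β lam X Y := by
    intro X hX
    have := h.dstep hlam hκ le_rfl he s hX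
    simpa using this
  have hee : ∀ X ∈ upperHalf n, df V (1 / m) e s X ^ m ≤
      ∫⁻ Y in upperHalf n, df U (θ / m) e s Y ^ m * ker β α lam X Y :=
    fun X hX => h.swap.dstep hlam hθ0 hm1 he s hX
  set W := ∫⁻ X in upperHalf n, df U 1 e s X ^ (θ + 1) with hW
  set Hh := ∫⁻ X in upperHalf n, df V κ e s X ^ ((κ + 1) / κ) with hHh
  set Ee := ∫⁻ X in upperHalf n, df V (1 / m) e s X ^ (m * (κ + 1)) with hEe
  set Dd := ∫⁻ X in upperHalf n, df U (θ / m) e s X ^ ((θ + 1) / j') with hDd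
  have Wt : W ≠ ⊤ := by
    refine ne_top_of_le_ne_top h.iU (lintegral_mono fun X => ENNReal.rpow_le_rpow ?_ (by positivity))
    simpa using df_le U 1 e s X
  have Ht : Hh ≠ ⊤ := by
    refine ne_top_of_le_ne_top h.iV (lintegral_mono fun X =>
      (ENNReal.rpow_le_rpow (df_le V κ e s X) (by positivity)).trans (le_of_eq ?_))
    rw [← ENNReal.rpow_mul]; congr 1; field_simp
  have Et : Ee ≠ ⊤ := by
    refine ne_top_of_le_ne_top h.iV (lintegral_mono fun X =>
      (ENNReal.rpow_le_rpow (df_le V (1 / m) e s X) (by positivity)).trans (le_of_eq ?_))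
    rw [← ENNReal.rpow_mul]; congr 1; field_simp
  have Dt : Dd ≠ ⊤ := by
    refine ne_top_of_le_ne_top h.iU (lintegral_mono fun X =>
      (ENNReal.rpow_le_rpow (df_le U (θ / m) e s X) (by positivity)).trans (le_of_eq ?_))
    rw [← ENNReal.rpow_mul]; congr 1; rw [hj']; field_simp
  have b1 : W ^ (1 / (θ + 1)) ≤ C1 * Hh ^ a1 :=
    H1 _ _ mw mh (tdf U h.tU 1 zero_le_one) (tdf V h.tV κ hκ.le) hw Wt Ht
  have b2 : Ee ^ (1 / (κ + 1)) ≤ C2 * Dd ^ a2 := by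
    have e1 : ∀ X, (df V (1 / m) e s X ^ m) ^ (κ + 1) = df V (1 / m) e s X ^ (m * (κ + 1)) := fun X => by
      rw [← ENNReal.rpow_mul]
    have e2 : ∀ X, (df U (θ / m) e s X ^ m) ^ ((θ + 1) / θ) = df U (θ / m) e s X ^ ((θ + 1) / j') := fun X => by
      rw [← ENNReal.rpow_mul]; congr 1; rw [hj']; field_simp
    have := H2 (fun X => df V (1 / m) e s X ^ m) (fun X => df U (θ / m) e s X ^ m) (me.pow_const _) (md.pow_const _)
      (fun X => ENNReal.rpow_ne_top_of_nonneg hm0.le (tdf V h.tV (1 / m) (by positivity) X))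
      (fun X => ENNReal.rpow_ne_top_of_nonneg hm0.le (tdf U h.tU (θ / m) (by positivity) X)) hee
    simp only [e1, e2] at this
    exact this Et Dt
  have b3 : Hh ≤ c1 * (IV ^ (1 - 1 / j) * Ee ^ (1 / j)) := by
    have := holder_step (μ := volume.restrict (upperHalf n)) (a := df V κ e s) (f := fun X => V X ^ (1 / m))
      (g := df V (1 / m) e s) (j := j) (r := m * (κ + 1)) hκm (by positivity) (h.mV.pow_const _) me
      (Filter.Eventually.of_forall fun X => by
        unfold df
        split_ifs
        · have hb := bern (a := V X ^ (1 / m)) (b := V (rho e s X) ^ (1 / m)) (j := j)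
            (ENNReal.rpow_ne_top_of_nonneg (by positivity) (h.tV X)) hκm
          rw [← ENNReal.rpow_mul, ← ENNReal.rpow_mul, show 1 / m * j = κ by rw [hj]; field_simp] at hb
          exact hb
        · exact zero_le)
    have e1 : ∀ X, (V X ^ (1 / m)) ^ (m * (κ + 1)) = V X ^ (κ + 1) := fun X => by
      rw [← ENNReal.rpow_mul]; congr 1; field_simp
    simp only [e1] at this
    rw [show m * (κ + 1) / j = (κ + 1) / κ by rw [hj]; field_simp] at this
    rw [hc1, show m * (κ + 1) / j = (κ + 1) / κ by rw [hj]; field_simp]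
    exact this
  have hdw : ∀ X, df U (θ / m) e s X ≤ ENNReal.ofReal j' * (Bset U e s).indicator U X ^ (j' - 1) * df U 1 e s X := by
    intro X
    by_cases hB : X ∈ Bset U e s
    · rw [Set.indicator_of_mem hB, df, if_pos hB.1, df, if_pos hB.1, ENNReal.rpow_one, ENNReal.rpow_one]
      exact bern (h.tU X) hj'1.le
    · rw [df]
      split_ifs with hs
      · have : U X ≤ U (rho e s X) := by
          by_contra hcon
          exact hB ⟨hs, not_le.1 hcon⟩
        rw [tsub_eq_zero_of_le (ENNReal.rpow_le_rpow this (by positivity))]; exact zero_le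
      · exact zero_le
  have b4 : Dd ≤ c2 * (IB ^ (1 - 1 / j') * W ^ (1 / j')) :=
    holder_step hj'1.le (by positivity) (h.mU.indicator (measurableSet_Bset h.mU e s)) mw
      (Filter.Eventually.of_forall hdw)
  -- combine
  have comb : W ^ (1 / (θ + 1)) ≤ M * IB ^ η * W ^ (1 / (θ + 1)) := by
    have s1 : Ee ^ (1 / j) ≤ (C2 * (c2 * (IB ^ (1 - 1 / j') * W ^ (1 / j'))) ^ a2) ^ ((κ + 1) * (1 / j)) := by
      calc Ee ^ (1 / j) = (Ee ^ (1 / (κ + 1))) ^ ((κ + 1) * (1 / j)) := by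
            rw [← ENNReal.rpow_mul]; congr 1; field_simp
        _ ≤ _ := by
            refine ENNReal.rpow_le_rpow (b2.trans ?_) (by positivity)
            gcongr
    have s2 : W ^ (1 / (θ + 1)) ≤ C1 * (c1 * (IV ^ (1 - 1 / j) *
        (C2 * (c2 * (IB ^ (1 - 1 / j') * W ^ (1 / j'))) ^ a2) ^ ((κ + 1) * (1 / j)))) ^ a1 := by
      refine b1.trans ?_
      gcongr
      refine b3.trans ?_
      gcongr
    refine s2.trans (le_of_eq ?_)
    have hk1 : 0 ≤ (κ + 1) * (1 / j) := by positivity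
    rw [hM]
    simp only [ENNReal.mul_rpow_of_nonneg _ _ ha2p.le, ENNReal.mul_rpow_of_nonneg _ _ hk1,
      ENNReal.mul_rpow_of_nonneg _ _ ha1p.le, ← ENNReal.rpow_mul]
    rw [show 1 / j' * a2 * ((κ + 1) * (1 / j)) * a1 = 1 / (θ + 1) by
      rw [hj', hj, ha1, ha2]; field_simp, ← hη]
    ring
  have hW0 : W = 0 := by
    by_contra hW0
    have q0 : W ^ (1 / (θ + 1)) ≠ 0 := by simp [ENNReal.rpow_eq_zero_iff, hW0, Wt]
    have qt : W ^ (1 / (θ + 1)) ≠ ⊤ := ENNReal.rpow_ne_top_of_nonneg (by positivity) Wt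
    have : M * IB ^ η * W ^ (1 / (θ + 1)) < 1 * W ^ (1 / (θ + 1)) := by
      exact ENNReal.mul_lt_mul_left q0 qt hIBs
    rw [one_mul] at this
    exact absurd comb (not_le.2 this)
  have w0 : ∀ᵐ X ∂(volume.restrict (upperHalf n)), df U 1 e s X = 0 := by
    have := (lintegral_eq_zero_iff (mw.pow_const _)).1 hW0
    filter_upwards [this] with X hX
    have hX' : df U 1 e s X ^ (θ + 1) = 0 := hX
    rw [ENNReal.rpow_eq_zero_iff] at hX'
    rcases hX' with ⟨h1, _⟩ | ⟨_, h2⟩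
    · exact h1
    · linarith
  have e0 : ∀ X ∈ upperHalf n, df V (1 / m) e s X = 0 := by
    intro X hX
    have h1 := hee X hX
    have h2 : ∫⁻ Y in upperHalf n, df U (θ / m) e s Y ^ m * ker β α lam X Y = 0 := by
      rw [lintegral_congr_ae (g := 0)]
      · simp
      · filter_upwards [w0] with Y hY
        have := hdw Y
        rw [hY, mul_zero] at this
        simp [le_antisymm this zero_le, ENNReal.zero_rpow_of_pos hm0]
    rw [h2] at h1
    have h3 := le_antisymm h1 zero_le
    rw [ENNReal.rpow_eq_zero_iff] at h3
    rcases h3 with ⟨h1, _⟩ | ⟨_, h2⟩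
    · exact h1
    · linarith
  have hV : ∀ X ∈ upperHalf n, s ≤ inner ℝ e X.1 → V X ≤ V (rho e s X) := by
    intro X hX hs
    have := e0 X hX
    rw [df, if_pos hs, tsub_eq_zero_iff_le] at this
    exact (ENNReal.rpow_le_rpow_iff (by positivity)).1 this
  intro X hX hs
  refine ⟨?_, hV X hX hs⟩
  have h1 := hw X hX
  have h2 : ∫⁻ Y in upperHalf n, df V κ e s Y * ker α β lam X Y = 0 := by
    rw [lintegral_congr_ae (g := 0)]
    · simp
    · filter_upwards [ae_mem_H n] with Y hY
      have : df V κ e s Y = 0 := by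
        rw [df]
        split_ifs with hsY
        · exact tsub_eq_zero_of_le (ENNReal.rpow_le_rpow (hV Y hY hsY) hκ.le)
        · rfl
      simp [this]
  rw [h2] at h1
  have h3 := le_antisymm h1 zero_le
  rw [df, if_pos hs, tsub_eq_zero_iff_le] at h3
  simpa using h3

end PartD1

section PartE1
open MeasureTheory ENNReal Filter Topology

lemma hyper_null {n : ℕ} {e : EuclideanSpace ℝ (Fin n)} (he : ‖e‖ = 1) (s : ℝ) :
    (volume : Measure (EuclideanSpace ℝ (Fin n) × ℝ)) {X | inner ℝ e X.1 = s} = 0 := by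
  let φ : (EuclideanSpace ℝ (Fin n) × ℝ) →ₗ[ℝ] ℝ := (innerₛₗ ℝ e).comp (LinearMap.fst ℝ _ _)
  have h0 : (volume : Measure (EuclideanSpace ℝ (Fin n) × ℝ)) (LinearMap.ker φ : Set _) = 0 := by
    apply Measure.addHaar_submodule
    intro h
    have : ((e, 0) : EuclideanSpace ℝ (Fin n) × ℝ) ∈ LinearMap.ker φ := by rw [h]; trivial
    simp [φ, he] at this
  have : {X : EuclideanSpace ℝ (Fin n) × ℝ | inner ℝ e X.1 = s} =
      (fun X => X + (((-s) • e, 0) : EuclideanSpace ℝ (Fin n) × ℝ)) ⁻¹' (LinearMap.ker φ : Set _) := by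
    ext X
    simp only [Set.mem_setOf_eq, Set.mem_preimage, SetLike.mem_coe, LinearMap.mem_ker, φ, LinearMap.comp_apply,
      LinearMap.fst_apply, Prod.fst_add, innerₛₗ_apply_apply, inner_add_right, inner_smul_right,
      real_inner_self_eq_norm_sq, he]
    constructor <;> intro h <;> linarith
  rw [this, measure_preimage_add_right, h0]

/-- tail of the energy in direction `c` -/
lemma tail_tendsto {n : ℕ} {θ : ℝ} (hθ : 0 < θ) {U : EuclideanSpace ℝ (Fin n) × ℝ → ℝ≥0∞} (mU : Measurable U)
    (iU : ∫⁻ X in upperHalf n, U X ^ (θ + 1) ≠ ⊤) (c : EuclideanSpace ℝ (Fin n)) :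
    Tendsto (fun s : ℝ => ∫⁻ X in upperHalf n, {X : EuclideanSpace ℝ (Fin n) × ℝ | s ≤ inner ℝ c X.1}.indicator U X ^ (θ + 1))
      atTop (𝓝 0) := by
  have := tendsto_lintegral_filter_of_dominated_convergence (μ := volume.restrict (upperHalf n)) (l := (atTop : Filter ℝ))
    (F := fun s X => {X : EuclideanSpace ℝ (Fin n) × ℝ | s ≤ inner ℝ c X.1}.indicator U X ^ (θ + 1)) (f := fun _ => 0)
    (fun X => U X ^ (θ + 1))
    (Eventually.of_forall fun s => (mU.indicator (measurableSet_half c s)).pow_const _)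
    (Eventually.of_forall fun s => Eventually.of_forall fun X =>
      ENNReal.rpow_le_rpow (Set.indicator_le_self _ _ _) (by positivity)) iU
    (Eventually.of_forall fun X => by
      refine tendsto_const_nhds.congr' ?_
      filter_upwards [eventually_gt_atTop (inner ℝ c X.1)] with s hs
      rw [Set.indicator_of_notMem (by simpa using hs), ENNReal.zero_rpow_of_pos (by positivity)])
  simpa using this

lemma no_translation {n : ℕ} {θ : ℝ} (hθ : 0 < θ) {U : EuclideanSpace ℝ (Fin n) × ℝ → ℝ≥0∞} (mU : Measurable U)
    (iU : ∫⁻ X in upperHalf n, U X ^ (θ + 1) ≠ ⊤) (pU : ∀ X ∈ upperHalf n, U X ≠ 0)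
    {c : EuclideanSpace ℝ (Fin n)} (hc : c ≠ 0)
    (hinv : ∀ X ∈ upperHalf n, U (X.1 + c, X.2) = U X) : False := by
  set J : ℝ → ℝ≥0∞ := fun s => ∫⁻ X in upperHalf n,
    {X : EuclideanSpace ℝ (Fin n) × ℝ | s ≤ inner ℝ c X.1}.indicator U X ^ (θ + 1) with hJ
  have hcc : 0 < ‖c‖ ^ 2 := by have := norm_pos_iff.2 hc; positivity
  have hmp : MeasurePreserving (fun X : EuclideanSpace ℝ (Fin n) × ℝ => X + (c, 0))
      (volume.restrict (upperHalf n)) (volume.restrict (upperHalf n)) := by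
    have h1 := measurePreserving_add_right (volume : Measure (EuclideanSpace ℝ (Fin n) × ℝ)) (c, 0)
    have h2 := h1.restrict_preimage (measurableSet_upperHalf n)
    have : (fun X : EuclideanSpace ℝ (Fin n) × ℝ => X + (c, 0)) ⁻¹' upperHalf n = upperHalf n := by
      ext X; simp [upperHalf]
    rw [this] at h2
    exact h2
  have step : ∀ s, J (s + ‖c‖ ^ 2) = J s := by
    intro s
    have m : Measurable fun X => {X : EuclideanSpace ℝ (Fin n) × ℝ | s + ‖c‖ ^ 2 ≤ inner ℝ c X.1}.indicator U X ^ (θ + 1) :=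
      (mU.indicator (measurableSet_half c _)).pow_const _
    simp only [hJ]
    rw [← hmp.lintegral_comp m]
    refine setLIntegral_congr_fun (measurableSet_upperHalf n) fun X hX => ?_
    have hU : U (X + (c, 0)) = U X := by
      rw [← hinv X hX]; congr 1; ext1 <;> simp
    simp only [Set.indicator_apply, Set.mem_setOf_eq, Prod.fst_add, inner_add_right, real_inner_self_eq_norm_sq,
      add_le_add_iff_right, hU]
  have hk : ∀ k : ℕ, J (k * ‖c‖ ^ 2) = J 0 := by
    intro k
    induction k with
    | zero => simp
    | succ k ih => rw [show ((k + 1 : ℕ) : ℝ) * ‖c‖ ^ 2 = k * ‖c‖ ^ 2 + ‖c‖ ^ 2 by push_cast; ring, step, ih]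
  have hlim : Tendsto (fun k : ℕ => J (k * ‖c‖ ^ 2)) atTop (𝓝 0) :=
    (tail_tendsto hθ mU iU c).comp (tendsto_natCast_atTop_atTop.atTop_mul_const hcc)
  simp only [hk] at hlim
  have hJ0 : J 0 = 0 := tendsto_nhds_unique tendsto_const_nhds hlim
  have m : Measurable fun X => {X : EuclideanSpace ℝ (Fin n) × ℝ | 0 ≤ inner ℝ c X.1}.indicator U X ^ (θ + 1) :=
      (mU.indicator (measurableSet_half c _)).pow_const _
  have hae := (lintegral_eq_zero_iff m).1 hJ0
  have hopen : IsOpen ({X : EuclideanSpace ℝ (Fin n) × ℝ | 0 < inner ℝ c X.1} ∩ upperHalf n) :=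
    (isOpen_lt continuous_const (by fun_prop)).inter (isOpen_lt continuous_const continuous_snd)
  have hpos : 0 < (volume : Measure (EuclideanSpace ℝ (Fin n) × ℝ)) ({X : EuclideanSpace ℝ (Fin n) × ℝ | 0 < inner ℝ c X.1} ∩ upperHalf n) := by
    refine hopen.measure_pos volume ?_
    refine ⟨(c, 1), ?_, ?_⟩
    · simpa using hcc
    · simp [upperHalf]
  rw [EventuallyEq, ae_restrict_iff' (measurableSet_upperHalf n), ae_iff] at hae
  refine hpos.ne' (measure_mono_null ?_ hae)
  rintro X ⟨h1, h2⟩ h3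
  have h3' := h3 h2
  have h0 : (0 : ℝ) < inner ℝ c X.1 := h1
  have h1' : X ∈ {X : EuclideanSpace ℝ (Fin n) × ℝ | 0 ≤ inner ℝ c X.1} := h0.le
  rw [Set.indicator_of_mem h1'] at h3'
  simp only [Pi.zero_apply, ENNReal.rpow_eq_zero_iff] at h3'
  rcases h3' with ⟨h, _⟩ | ⟨_, h⟩
  · exact pU X h2 h
  · linarith

section planes
variable {n : ℕ} {lam κ θ α β : ℝ} {U V : EuclideanSpace ℝ (Fin n) × ℝ → ℝ≥0∞}

lemma Sys.large (h : Sys n lam κ θ α β U V) (hθ : 0 < θ) {ε : ℝ≥0∞} (hε : 0 < ε)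
    (key : ∀ (e : EuclideanSpace ℝ (Fin n)) (s : ℝ), ‖e‖ = 1 →
      ∫⁻ X in upperHalf n, (Bset U e s).indicator U X ^ (θ + 1) < ε → PP U V e s)
    {e : EuclideanSpace ℝ (Fin n)} (he : ‖e‖ = 1) : ∃ S : ℝ, ∀ s, S ≤ s → PP U V e s := by
  have := (tail_tendsto hθ h.mU h.iU e).eventually_lt_const hε
  obtain ⟨S, hS⟩ := eventually_atTop.1 this
  refine ⟨S, fun s hs => key e s he (lt_of_le_of_lt (lintegral_mono fun X => ?_) (hS s hs))⟩
  refine ENNReal.rpow_le_rpow ?_ (by positivity)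
  exact Set.indicator_le_indicator_of_subset (fun X hX => hX.1) (fun _ => zero_le) X

lemma Sys.openStep (h : Sys n lam κ θ α β U V) (hlam : 0 < lam) (hκ : 0 < κ) (hθ : 0 < θ) {ε : ℝ≥0∞} (hε : 0 < ε)
    (key : ∀ (e : EuclideanSpace ℝ (Fin n)) (s : ℝ), ‖e‖ = 1 →
      ∫⁻ X in upperHalf n, (Bset U e s).indicator U X ^ (θ + 1) < ε → PP U V e s)
    {e : EuclideanSpace ℝ (Fin n)} (he : ‖e‖ = 1) {s : ℝ} (hP : PP U V e s) (hS : ¬ SymP U V e s) :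
    ∀ᶠ s' in 𝓝 s, PP U V e s' := by
  have hnull : ∀ᵐ X ∂(volume.restrict (upperHalf n)), inner ℝ e X.1 ≠ s := by
    apply ae_restrict_of_ae
    rw [ae_iff]
    simpa using hyper_null he s
  have := tendsto_lintegral_filter_of_dominated_convergence (μ := volume.restrict (upperHalf n)) (l := 𝓝 s)
    (F := fun s X => (Bset U e s).indicator U X ^ (θ + 1)) (f := fun _ => 0)
    (fun X => U X ^ (θ + 1))
    (Eventually.of_forall fun s => (h.mU.indicator (measurableSet_Bset h.mU e s)).pow_const _)
    (Eventually.of_forall fun s => Eventually.of_forall fun X =>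
      ENNReal.rpow_le_rpow (Set.indicator_le_self _ _ _) (by positivity)) h.iU
    (by
      filter_upwards [hnull, ae_mem_H n] with X hX hXH
      refine tendsto_const_nhds.congr' ?_
      have hnB : ∀ᶠ s' in 𝓝 s, X ∉ Bset U e s' := by
        rcases lt_or_gt_of_ne hX with h1 | h1
        · filter_upwards [eventually_gt_nhds h1] with s' hs' hB
          exact absurd hB.1 (not_le.2 hs')
        · have h2 := h.strict hlam hκ he hP hS hXH h1
          have h3 := h.lscU hlam (rho_mem e s hXH) h2
          have h4 : Tendsto (fun s' => rho e s' X) (𝓝 s) (𝓝 (rho e s X)) := by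
            apply Continuous.tendsto
            unfold rho; fun_prop
          filter_upwards [h4.eventually h3] with s' hs' hB
          exact absurd hB.2 hs'.le.not_gt
      filter_upwards [hnB] with s' hs'
      rw [Set.indicator_of_notMem hs', ENNReal.zero_rpow_of_pos (by positivity)])
  rw [lintegral_zero] at this
  filter_upwards [this.eventually_lt_const hε] with s' hs'
  exact key e s' he hs'

lemma Sys.closedStep (h : Sys n lam κ θ α β U V) (hlam : 0 < lam)
    {e : EuclideanSpace ℝ (Fin n)} (he : ‖e‖ = 1) {s : ℝ} (hP : ∀ s', s < s' → PP U V e s') : PP U V e s := by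
  intro X hX hs
  have hZ : Tendsto (fun s' => rho e s' (rho e s X)) (𝓝[>] s) (𝓝 X) := by
    have : Tendsto (fun s' => rho e s' (rho e s X)) (𝓝 s) (𝓝 (rho e s (rho e s X))) := by
      apply Continuous.tendsto
      unfold rho; fun_prop
    rw [rho_rho he] at this
    exact this.mono_left nhdsWithin_le_nhds
  have hin : ∀ s', s < s' → s' ≤ inner ℝ e (rho e s' (rho e s X)).1 := by
    intro s' hs'
    rw [inner_rho he, inner_rho he]; linarith
  constructor
  · by_contra hcon
    have h1 := hZ.eventually (h.lscU hlam hX (not_le.1 hcon))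
    obtain ⟨s', h2, h3⟩ := (h1.and self_mem_nhdsWithin).exists
    have := (hP s' h3 _ (rho_mem e s' (rho_mem e s hX)) (hin s' h3)).1
    rw [rho_rho he] at this
    exact absurd h2 this.not_gt
  · by_contra hcon
    have h1 := hZ.eventually (h.lscV hlam hX (not_le.1 hcon))
    obtain ⟨s', h2, h3⟩ := (h1.and self_mem_nhdsWithin).exists
    have := (hP s' h3 _ (rho_mem e s' (rho_mem e s hX)) (hin s' h3)).2
    rw [rho_rho he] at this
    exact absurd h2 this.not_gt

lemma rho_neg (e : EuclideanSpace ℝ (Fin n)) (s : ℝ) (X : EuclideanSpace ℝ (Fin n) × ℝ) :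
    rho (-e) (-s) X = rho e s X := by
  unfold rho
  ext1
  · simp only [inner_neg_left]; module
  · rfl

lemma rho_rho_trans {e : EuclideanSpace ℝ (Fin n)} (he : ‖e‖ = 1) (s s' : ℝ) (X : EuclideanSpace ℝ (Fin n) × ℝ) :
    rho e s' (rho e s X) = (X.1 + (2 * (s' - s)) • e, X.2) := by
  ext1
  · rw [rho, inner_rho he]
    simp only [rho]
    module
  · rfl

lemma Sys.plane (h : Sys n lam κ θ α β U V) (hlam : 0 < lam) (hκ : 0 < κ) (hθ : 0 < θ) {ε : ℝ≥0∞} (hε : 0 < ε)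
    (key : ∀ (e : EuclideanSpace ℝ (Fin n)) (s : ℝ), ‖e‖ = 1 →
      ∫⁻ X in upperHalf n, (Bset U e s).indicator U X ^ (θ + 1) < ε → PP U V e s)
    {e : EuclideanSpace ℝ (Fin n)} (he : ‖e‖ = 1) :
    ∃ s0 : ℝ, (∀ s, s0 ≤ s → PP U V e s) ∧ SymP U V e s0 := by
  set T : Set ℝ := {s | ∀ s', s ≤ s' → PP U V e s'} with hT
  obtain ⟨S, hS⟩ := h.large hθ hε key he
  have hne : T.Nonempty := ⟨S, hS⟩
  by_cases hbd : BddBelow T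
  · have hmem : sInf T ∈ T := by
      have hgt : ∀ s', sInf T < s' → PP U V e s' := by
        intro s' hs'
        obtain ⟨s, hs, hss⟩ := exists_lt_of_csInf_lt hne hs'
        exact hs s' hss.le
      intro s' hs'
      rcases hs'.eq_or_lt with h1 | h1
      · rw [← h1]; exact h.closedStep hlam he hgt
      · exact hgt s' h1
    refine ⟨sInf T, hmem, ?_⟩
    by_contra hsym
    have hop := h.openStep hlam hκ hθ hε key he (hmem _ le_rfl) hsym
    obtain ⟨δ, hδ, hball⟩ := Metric.eventually_nhds_iff.1 hop
    have : sInf T - δ / 2 ∈ T := by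
      intro s' hs'
      rcases le_total (sInf T) s' with h1 | h1
      · exact hmem s' h1
      · apply hball
        rw [Real.dist_eq, abs_lt]; constructor <;> linarith
    have := csInf_le hbd this
    linarith
  · exfalso
    have hall : ∀ s, PP U V e s := by
      intro s
      by_contra hcon
      apply hbd
      refine ⟨s, fun s' hs' => ?_⟩
      by_contra hlt
      exact hcon (hs' s (not_le.1 hlt).le)
    obtain ⟨S', hS'⟩ := h.large hθ hε key (e := -e) (by rw [norm_neg]; exact he)
    have hsym : ∀ s, s ≤ -S' → ∀ X ∈ upperHalf n, U (rho e s X) = U X := by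
      intro s hs X hX
      have hneg := hS' (-s) (by linarith)
      have hside : ∀ Z ∈ upperHalf n, s ≤ inner ℝ e Z.1 → U (rho e s Z) = U Z := by
        intro Z hZ hsZ
        refine le_antisymm ?_ (hall s Z hZ hsZ).1
        have := (hneg (rho e s Z) (rho_mem e s hZ) (by rw [inner_neg_left, inner_rho he]; linarith)).1
        rwa [rho_neg, rho_rho he] at this
      rcases le_total s (inner ℝ e X.1) with h1 | h1
      · exact hside X hX h1
      · have := hside (rho e s X) (rho_mem e s hX) (by rw [inner_rho he]; linarith)
        rw [rho_rho he] at this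
        exact this.symm
    have he0 : e ≠ 0 := by rintro rfl; simp at he
    refine no_translation hθ h.mU h.iU h.pU (c := (2 : ℝ) • e) (by simpa using he0) ?_
    intro X hX
    have h1 := hsym (-S') le_rfl _ (rho_mem e (-S' - 1) hX)
    rw [hsym (-S' - 1) (by linarith) X hX, rho_rho_trans he] at h1
    rw [← h1]; congr 3; norm_num

end planes

end PartE1

section PartE2
open MeasureTheory ENNReal Filter Topology

section assembly
variable {n : ℕ} {lam κ θ α β : ℝ} {U V : EuclideanSpace ℝ (Fin n) × ℝ → ℝ≥0∞}

/-- flip the coordinates in `A` about `s` -/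
def flipC (s : Fin n → ℝ) (A : Finset (Fin n)) (x : EuclideanSpace ℝ (Fin n)) : EuclideanSpace ℝ (Fin n) :=
  WithLp.toLp 2 (fun i => if i ∈ A then 2 * s i - x i else x i)

lemma flipC_insert (s : Fin n → ℝ) (A : Finset (Fin n)) (i : Fin n) (hi : i ∉ A) (x : EuclideanSpace ℝ (Fin n)) (t : ℝ) :
    (flipC s (insert i A) x, t) = rho (EuclideanSpace.single i 1) (s i) (flipC s A x, t) := by
  ext1
  · ext j
    simp only [flipC, rho, EuclideanSpace.inner_single_left, PiLp.sub_apply, PiLp.smul_apply,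
      EuclideanSpace.single_apply, Finset.mem_insert]
    by_cases h : j = i
    · subst h; simp [hi]; ring
    · simp [h]
  · rfl

lemma flip_inv {s : Fin n → ℝ} (hs : ∀ i, SymP U V (EuclideanSpace.single i 1) (s i)) (A : Finset (Fin n))
    (x : EuclideanSpace ℝ (Fin n)) {t : ℝ} (ht : 0 < t) : U (flipC s A x, t) = U (x, t) := by
  induction A using Finset.induction_on with
  | empty => simp [flipC]
  | insert i A hi ih =>
    rw [flipC_insert s A i hi, (hs i (flipC s A x, t) ht).1, ih]

lemma Sys.main (h : Sys n lam κ θ α β U V) (hlam : 0 < lam) (hκ : 0 < κ) (hθ : 0 < θ) {ε : ℝ≥0∞} (hε : 0 < ε)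
    (key : ∀ (e : EuclideanSpace ℝ (Fin n)) (s : ℝ), ‖e‖ = 1 →
      ∫⁻ X in upperHalf n, (Bset U e s).indicator U X ^ (θ + 1) < ε → PP U V e s) :
    ∃ x0 : EuclideanSpace ℝ (Fin n), ∀ t : ℝ, 0 < t → ∀ x x' : EuclideanSpace ℝ (Fin n),
      ‖x - x0‖ ≤ ‖x' - x0‖ → U (x', t) ≤ U (x, t) ∧ V (x', t) ≤ V (x, t) := by
  have hpl := fun i : Fin n => h.plane hlam hκ hθ hε key (e := EuclideanSpace.single i (1 : ℝ)) (by simp)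
  choose s hs using hpl
  set x0 : EuclideanSpace ℝ (Fin n) := WithLp.toLp 2 s with hx0
  have hσ : ∀ x : EuclideanSpace ℝ (Fin n), ∀ t : ℝ, 0 < t → U ((2 : ℝ) • x0 - x, t) = U (x, t) := by
    intro x t ht
    rw [← flip_inv (fun i => (hs i).2) Finset.univ x ht]
    congr 2
    ext i
    simp [flipC, hx0]
  have hcen : ∀ e : EuclideanSpace ℝ (Fin n), ‖e‖ = 1 → ∀ r, SymP U V e r → r = inner ℝ e x0 := by
    intro e he r hr
    by_contra hne
    have he0 : e ≠ 0 := by rintro rfl; simp at he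
    refine no_translation hθ h.mU h.iU h.pU (c := (-(4 * (r - inner ℝ e x0))) • e)
      (smul_ne_zero (neg_ne_zero.2 (mul_ne_zero (by norm_num) (sub_ne_zero.2 hne))) he0) ?_
    rintro ⟨x, t⟩ hX
    have ht : 0 < t := hX
    have e1 := (hr (x, t) ht).1
    have e2 := hσ (rho e r (x, t)).1 t ht
    have e3 := (hr ((2 : ℝ) • x0 - (rho e r (x, t)).1, t) ht).1
    have e4 := hσ (rho e r ((2 : ℝ) • x0 - (rho e r (x, t)).1, t)).1 t ht
    have e5 : (2 : ℝ) • x0 - (rho e r ((2 : ℝ) • x0 - (rho e r (x, t)).1, t)).1 = x + (-(4 * (r - inner ℝ e x0))) • e := by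
      have : inner ℝ e ((2 : ℝ) • x0 - (rho e r (x, t)).1) = 2 * inner ℝ e x0 - (2 * r - inner ℝ e x) := by
        rw [inner_sub_right, inner_rho he, inner_smul_right]
      rw [rho, this]
      simp only [rho]
      module
    rw [e5] at e4
    exact e4.trans (e3.trans (e2.trans e1))
  refine ⟨x0, fun t ht x x' hxx => ?_⟩
  by_cases hx : x = x'
  · subst hx; exact ⟨le_rfl, le_rfl⟩
  have hd : 0 < ‖x' - x‖ := norm_pos_iff.2 (sub_ne_zero.2 (Ne.symm hx))
  set d := ‖x' - x‖ with hdd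
  set e : EuclideanSpace ℝ (Fin n) := d⁻¹ • (x' - x) with he_def
  have he : ‖e‖ = 1 := by
    rw [he_def, norm_smul, norm_inv, Real.norm_of_nonneg hd.le, ← hdd, inv_mul_cancel₀ hd.ne']
  have hxe : x' - x = d • e := by rw [he_def, smul_smul, mul_inv_cancel₀ hd.ne', one_smul]
  have hx' : x' = x + d • e := by rw [← hxe]; abel
  obtain ⟨s0, hP, hS⟩ := h.plane hlam hκ hθ hε key he
  have hs0 := hcen e he s0 hS
  have hee : inner ℝ e e = (1 : ℝ) := by rw [real_inner_self_eq_norm_sq, he]; norm_num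
  have hle : s0 ≤ inner ℝ e x + d / 2 := by
    have h1 : ‖x - x0‖ ^ 2 ≤ ‖x' - x0‖ ^ 2 := by gcongr
    rw [hx', show x + d • e - x0 = (x - x0) + d • e by abel, norm_add_sq_real, inner_smul_right, norm_smul, he,
      real_inner_comm, inner_sub_right, Real.norm_of_nonneg hd.le] at h1
    rw [hs0]
    by_contra hcon
    nlinarith
  have := hP (inner ℝ e x + d / 2) hle (x', t) ht (by
    simp only [hx', inner_add_right, inner_smul_right, hee]; linarith)
  have hr : rho e (inner ℝ e x + d / 2) (x', t) = (x, t) := by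
    ext1
    · simp only [rho, hx', inner_add_right, inner_smul_right, hee]
      module
    · rfl
  rwa [hr] at this

end assembly

end PartE2

section PartF1
open MeasureTheory ENNReal

lemma amgm_real {κ a b : ℝ} (hκ : 0 < κ) (ha : 0 < a) (hb : 0 < b) :
    a * b ^ κ ≤ 1 / (κ + 1) * a ^ (κ + 1) + κ / (κ + 1) * b ^ (κ + 1) ∧
    (a * b ^ κ = 1 / (κ + 1) * a ^ (κ + 1) + κ / (κ + 1) * b ^ (κ + 1) → a = b) := by
  have hp : 0 < κ + 1 := by linarith
  have h1 : 0 < 1 / (κ + 1) := by positivity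
  have h2 : 0 < κ / (κ + 1) := by positivity
  have h3 : 1 / (κ + 1) + κ / (κ + 1) = 1 := by field_simp; ring
  have ha' : (a ^ (κ + 1)) ^ (1 / (κ + 1)) = a := by
    rw [← Real.rpow_mul ha.le, mul_one_div_cancel hp.ne', Real.rpow_one]
  have hb' : (b ^ (κ + 1)) ^ (κ / (κ + 1)) = b ^ κ := by
    rw [← Real.rpow_mul hb.le, mul_div_cancel₀ _ hp.ne']
  have ha0 : 0 ≤ a ^ (κ + 1) := by positivity
  have hb0 : 0 ≤ b ^ (κ + 1) := by positivity
  constructor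
  · have := Real.geom_mean_le_arith_mean2_weighted h1.le h2.le ha0 hb0 h3
    rwa [ha', hb'] at this
  · intro heq
    by_contra hne
    have hne' : a ^ (κ + 1) ≠ b ^ (κ + 1) := fun hh => hne (by
      rwa [Real.rpow_left_inj ha.le hb.le hp.ne'] at hh)
    have := (Real.geom_mean_lt_arith_mean2_weighted_iff_of_pos h1 h2 ha0 hb0 h3).2 hne'
    rw [ha', hb'] at this
    exact this.ne heq

lemma young_real {κ θ A A' B B' : ℝ} (hκ : 0 < κ) (hθ : 0 < θ) (hκθ : κ * θ = 1) (hA : 0 < A) (hA' : 0 < A')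
    (hB : 0 < B) (hB' : 0 < B') :
    A' ^ θ * B' ^ κ ≤ 1 / (κ + 1) * (A' ^ (θ + 1) / A) * B ^ κ + κ / (κ + 1) * (B' ^ (κ + 1) / B) * A ^ θ ∧
    (A' ^ θ * B' ^ κ = 1 / (κ + 1) * (A' ^ (θ + 1) / A) * B ^ κ + κ / (κ + 1) * (B' ^ (κ + 1) / B) * A ^ θ →
      A' ^ θ * B = A ^ θ * B') := by
  set a := (A' / A) ^ θ with ha_def
  set b := B' / B with hb_def
  have ha : 0 < a := by positivity
  have hb : 0 < b := by positivity
  have haκ : a ^ κ = A' / A := by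
    rw [ha_def, ← Real.rpow_mul (by positivity), mul_comm θ, hκθ, Real.rpow_one]
  have e1 : A' ^ θ = a * A ^ θ := by
    rw [ha_def, Real.div_rpow hA'.le hA.le]; field_simp
  have e2 : B' = b * B := by rw [hb_def]; field_simp
  have e3 : A' ^ (θ + 1) / A = a ^ (κ + 1) * A ^ θ := by
    rw [Real.rpow_add hA', Real.rpow_one, mul_div_assoc, ← haκ, e1, Real.rpow_add ha, Real.rpow_one]; ring
  have e4 : B' ^ (κ + 1) / B = b ^ (κ + 1) * B ^ κ := by
    rw [e2, Real.mul_rpow hb.le hB.le, Real.rpow_add hB, Real.rpow_one]; field_simp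
  have e5 : B' ^ κ = b ^ κ * B ^ κ := by rw [e2, Real.mul_rpow hb.le hB.le]
  obtain ⟨h1, h2⟩ := amgm_real hκ ha hb
  have hAB : 0 < A ^ θ * B ^ κ := by positivity
  rw [e3, e4, e1, e5]
  have r1 : 1 / (κ + 1) * (a ^ (κ + 1) * A ^ θ) * B ^ κ + κ / (κ + 1) * (b ^ (κ + 1) * B ^ κ) * A ^ θ =
    (1 / (κ + 1) * a ^ (κ + 1) + κ / (κ + 1) * b ^ (κ + 1)) * (A ^ θ * B ^ κ) := by ring
  have r2 : a * A ^ θ * (b ^ κ * B ^ κ) = (a * b ^ κ) * (A ^ θ * B ^ κ) := by ring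
  rw [r1, r2]
  refine ⟨mul_le_mul_of_nonneg_right h1 hAB.le, fun heq => ?_⟩
  have := h2 (mul_right_cancel₀ hAB.ne' heq)
  rw [e2, this]; ring

lemma young_enn {κ θ : ℝ} {A A' B B' : ℝ≥0∞} (hκ : 0 < κ) (hθ : 0 < θ) (hκθ : κ * θ = 1)
    (hA : A ≠ 0) (hA' : A' ≠ 0) (hB : B ≠ 0) (hB' : B' ≠ 0)
    (tA : A ≠ ⊤) (tA' : A' ≠ ⊤) (tB : B ≠ ⊤) (tB' : B' ≠ ⊤) :
    A' ^ θ * B' ^ κ ≤ ENNReal.ofReal (1 / (κ + 1)) * (A' ^ (θ + 1) / A) * B ^ κ +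
      ENNReal.ofReal (κ / (κ + 1)) * (B' ^ (κ + 1) / B) * A ^ θ ∧
    (A' ^ θ * B' ^ κ = ENNReal.ofReal (1 / (κ + 1)) * (A' ^ (θ + 1) / A) * B ^ κ +
      ENNReal.ofReal (κ / (κ + 1)) * (B' ^ (κ + 1) / B) * A ^ θ →
      A' ^ θ * B = A ^ θ * B') := by
  have conv : ∀ x : ℝ≥0∞, x ≠ 0 → x ≠ ⊤ → ∃ r : ℝ, 0 < r ∧ x = ENNReal.ofReal r := fun x h0 ht =>
    ⟨x.toReal, ENNReal.toReal_pos h0 ht, (ENNReal.ofReal_toReal ht).symm⟩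
  obtain ⟨a, ha, rfl⟩ := conv A hA tA
  obtain ⟨a', ha', rfl⟩ := conv A' hA' tA'
  obtain ⟨b, hb, rfl⟩ := conv B hB tB
  obtain ⟨b', hb', rfl⟩ := conv B' hB' tB'
  have hp : 0 < κ + 1 := by linarith
  obtain ⟨h1, h2⟩ := young_real hκ hθ hκθ ha ha' hb hb'
  rw [ENNReal.ofReal_rpow_of_pos ha', ENNReal.ofReal_rpow_of_pos hb', ENNReal.ofReal_rpow_of_pos ha',
    ENNReal.ofReal_rpow_of_pos hb', ENNReal.ofReal_rpow_of_pos hb, ENNReal.ofReal_rpow_of_pos ha,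
    ← ENNReal.ofReal_div_of_pos ha, ← ENNReal.ofReal_div_of_pos hb, ← ENNReal.ofReal_mul (by positivity),
    ← ENNReal.ofReal_mul (by positivity), ← ENNReal.ofReal_mul (by positivity), ← ENNReal.ofReal_mul (by positivity),
    ← ENNReal.ofReal_mul (by positivity), ← ENNReal.ofReal_add (by positivity) (by positivity),
    ← ENNReal.ofReal_mul (by positivity), ← ENNReal.ofReal_mul (by positivity)]
  refine ⟨ENNReal.ofReal_le_ofReal h1, fun heq => ?_⟩
  rw [ENNReal.ofReal_eq_ofReal_iff (by positivity) (by positivity)] at heq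
  rw [h2 heq]

section crit
variable {n : ℕ} {lam κ θ α β : ℝ} {U V U' V' : EuclideanSpace ℝ (Fin n) × ℝ → ℝ≥0∞}

lemma Sys.energy (h : Sys n lam κ θ α β U V) (hκ : 0 < κ) (hθ : 0 < θ) :
    ∫⁻ X in upperHalf n, U X ^ (θ + 1) = ∫⁻ X in upperHalf n, V X ^ (κ + 1) :=
  energy_eq hκ hθ h.mU h.mV h.tU h.tV h.pU h.pV h.eqU h.eqV

lemma Sys.uniq (h : Sys n lam κ θ α β U V) (h' : Sys n lam κ θ α β U' V') (hlam : 0 < lam)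
    (hκ : 0 < κ) (hθ : 0 < θ) (hκθ : κ * θ = 1)
    (hI : ∫⁻ X in upperHalf n, U' X ^ (θ + 1) = ∫⁻ X in upperHalf n, U X ^ (θ + 1)) :
    ∀ X ∈ upperHalf n, U' X = U X := by
  have hp : 0 < κ + 1 := by linarith
  have mU := h.mU
  have mV := h.mV
  have mU' := h'.mU
  have mV' := h'.mV
  have mk := measurable_ker (n := n) α β lam
  set μ := (volume : Measure (EuclideanSpace ℝ (Fin n) × ℝ)).restrict (upperHalf n) with hμ
  set I := ∫⁻ X, U X ^ (θ + 1) ∂μ with hIdef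
  have hV : ∫⁻ X, V X ^ (κ + 1) ∂μ = I := (h.energy hκ hθ).symm
  have hV' : ∫⁻ X, V' X ^ (κ + 1) ∂μ = I := (h'.energy hκ hθ).symm.trans hI
  set F : (EuclideanSpace ℝ (Fin n) × ℝ) × (EuclideanSpace ℝ (Fin n) × ℝ) → ℝ≥0∞ := fun Z =>
    U' Z.1 ^ θ * V' Z.2 ^ κ * ker α β lam Z.1 Z.2 with hF
  set G1 : (EuclideanSpace ℝ (Fin n) × ℝ) × (EuclideanSpace ℝ (Fin n) × ℝ) → ℝ≥0∞ := fun Z =>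
    ENNReal.ofReal (1 / (κ + 1)) * (U' Z.1 ^ (θ + 1) / U Z.1) * V Z.2 ^ κ * ker α β lam Z.1 Z.2 with hG1
  set G2 : (EuclideanSpace ℝ (Fin n) × ℝ) × (EuclideanSpace ℝ (Fin n) × ℝ) → ℝ≥0∞ := fun Z =>
    ENNReal.ofReal (κ / (κ + 1)) * (V' Z.2 ^ (κ + 1) / V Z.2) * U Z.1 ^ θ * ker α β lam Z.1 Z.2 with hG2
  have mF : Measurable F := by simp only [hF]; fun_prop
  have mG1 : Measurable G1 := by simp only [hG1]; fun_prop
  have mG2 : Measurable G2 := by simp only [hG2]; fun_prop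
  have iF : ∫⁻ Z, F Z ∂(μ.prod μ) = I := by
    rw [lintegral_prod _ mF.aemeasurable, ← hI]
    refine setLIntegral_congr_fun (measurableSet_upperHalf n) fun X hX => ?_
    simp only [hF, mul_assoc]
    rw [lintegral_const_mul' _ _ (ENNReal.rpow_ne_top_of_nonneg hθ.le (h'.tU X)), hμ, ← h'.eqU X hX,
      ENNReal.rpow_add _ _ (h'.pU X hX) (h'.tU X), ENNReal.rpow_one]
  have iG1 : ∫⁻ Z, G1 Z ∂(μ.prod μ) = ENNReal.ofReal (1 / (κ + 1)) * I := by
    rw [lintegral_prod _ mG1.aemeasurable, ← hI, ← lintegral_const_mul' _ _ ENNReal.ofReal_ne_top]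
    refine setLIntegral_congr_fun (measurableSet_upperHalf n) fun X hX => ?_
    have hfin : U' X ^ (θ + 1) / U X ≠ ⊤ :=
      ENNReal.div_ne_top (ENNReal.rpow_ne_top_of_nonneg (by linarith) (h'.tU X)) (h.pU X hX)
    simp only [hG1, mul_assoc]
    rw [lintegral_const_mul' _ _ ENNReal.ofReal_ne_top, lintegral_const_mul' _ _ hfin, hμ, ← h.eqU X hX,
      ENNReal.div_mul_cancel (h.pU X hX) (h.tU X)]
  have iG2 : ∫⁻ Z, G2 Z ∂(μ.prod μ) = ENNReal.ofReal (κ / (κ + 1)) * I := by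
    rw [lintegral_prod_symm _ mG2.aemeasurable, ← hV', ← lintegral_const_mul' _ _ ENNReal.ofReal_ne_top]
    refine setLIntegral_congr_fun (measurableSet_upperHalf n) fun Y hY => ?_
    have hfin : V' Y ^ (κ + 1) / V Y ≠ ⊤ :=
      ENNReal.div_ne_top (ENNReal.rpow_ne_top_of_nonneg (by linarith) (h'.tV Y)) (h.pV Y hY)
    simp only [hG2, mul_assoc]
    rw [lintegral_const_mul' _ _ ENNReal.ofReal_ne_top, lintegral_const_mul' _ _ hfin, hμ, ← h.eqV Y hY,
      ENNReal.div_mul_cancel (h.pV Y hY) (h.tV Y)]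
  have iG : ∫⁻ Z, (G1 Z + G2 Z) ∂(μ.prod μ) = I := by
    rw [lintegral_add_left mG1, iG1, iG2, ← add_mul, ← ENNReal.ofReal_add (by positivity) (by positivity),
      show 1 / (κ + 1) + κ / (κ + 1) = 1 by field_simp; ring, ENNReal.ofReal_one, one_mul]
  have hmem : ∀ᵐ Z ∂(μ.prod μ), Z ∈ upperHalf n ×ˢ upperHalf n := by
    rw [hμ, Measure.prod_restrict]
    exact ae_restrict_mem ((measurableSet_upperHalf n).prod (measurableSet_upperHalf n))
  have hle : F ≤ᵐ[μ.prod μ] fun Z => G1 Z + G2 Z := by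
    filter_upwards [hmem] with Z hZ
    have := (young_enn hκ hθ hκθ (h.pU _ hZ.1) (h'.pU _ hZ.1) (h.pV _ hZ.2) (h'.pV _ hZ.2)
      (h.tU _) (h'.tU _) (h.tV _) (h'.tV _)).1
    simp only [hF, hG1, hG2]
    rw [← add_mul]
    exact mul_le_mul_left this _
  have heq := ae_eq_of_ae_le_of_lintegral_le hle (by rw [iF]; exact h.iU) (mG1.add mG2).aemeasurable
    (by rw [iF, iG])
  have hI0 : I ≠ 0 := by
    intro h0
    rw [hIdef, lintegral_eq_zero_iff (mU.pow_const _)] at h0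
    have hfalse : ∀ᵐ X ∂μ, False := by
      filter_upwards [h0, ae_mem_H n] with X hX hXH
      simp only [Pi.zero_apply, ENNReal.rpow_eq_zero_iff] at hX
      rcases hX with ⟨h1, _⟩ | ⟨_, h1⟩
      · exact h.pU X hXH h1
      · linarith
    rw [Filter.eventually_false_iff_eq_bot, ae_eq_bot, hμ, Measure.restrict_eq_zero] at hfalse
    have hopen : IsOpen (upperHalf n) := isOpen_lt continuous_const continuous_snd
    exact (hopen.measure_pos volume ⟨(0, 1), by simp [upperHalf]⟩).ne' hfalse
  have hae : ∀ᵐ X ∂μ, U' X = U X := by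
    filter_upwards [Measure.ae_ae_of_ae_prod heq, ae_mem_H n] with X hX hXH
    have hprop : ∀ᵐ Y ∂μ, U' X ^ θ * V Y = U X ^ θ * V' Y := by
      filter_upwards [hX, ae_mem_H n, ae_ne_restrict X] with Y hY hYH hne
      refine (young_enn hκ hθ hκθ (h.pU _ hXH) (h'.pU _ hXH) (h.pV _ hYH) (h'.pV _ hYH)
        (h.tU _) (h'.tU _) (h.tV _) (h'.tV _)).2 ?_
      simp only [hF, hG1, hG2] at hY
      rw [← add_mul] at hY
      exact (ENNReal.mul_left_inj (ker_pos α β hlam hXH hYH) (ker_ne_top α β lam hXH hYH hne)).1 hY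
    have h1 : ∫⁻ Y, (U' X ^ θ * V Y) ^ (κ + 1) ∂μ = ∫⁻ Y, (U X ^ θ * V' Y) ^ (κ + 1) ∂μ :=
      lintegral_congr_ae (by filter_upwards [hprop] with Y hY; rw [hY])
    simp only [ENNReal.mul_rpow_of_nonneg _ _ hp.le] at h1
    rw [lintegral_const_mul _ (mV.pow_const _), lintegral_const_mul _ (mV'.pow_const _), hV, hV',
      ENNReal.mul_left_inj hI0 h.iU, ← ENNReal.rpow_mul, ← ENNReal.rpow_mul] at h1
    exact ENNReal.rpow_left_injective (by positivity) h1
  have hVV : ∀ Y ∈ upperHalf n, V' Y = V Y := by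
    intro Y hY
    rw [h.eqV Y hY, h'.eqV Y hY]
    exact lintegral_congr_ae (by filter_upwards [hae] with X hX; rw [hX])
  intro X hX
  rw [h.eqU X hX, h'.eqU X hX]
  exact setLIntegral_congr_fun (measurableSet_upperHalf n) fun Y hY => by simp only [hVV Y hY]

lemma Sys.rho (h : Sys n lam κ θ α β U V) {e : EuclideanSpace ℝ (Fin n)} (he : ‖e‖ = 1) (s : ℝ) :
    Sys n lam κ θ α β (fun X => U (rho e s X)) (fun X => V (rho e s X)) where
  mU := measurable_comp_rho h.mU e s
  mV := measurable_comp_rho h.mV e s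
  tU X := h.tU _
  tV X := h.tV _
  pU X hX := h.pU _ (rho_mem e s hX)
  pV X hX := h.pV _ (rho_mem e s hX)
  eqU X hX := h.eqUr he s hX
  eqV Y hY := by
    have := h.swap.eqUr he s hY
    simp only [ker_swap] at this
    convert this using 3
  iU := by
    rw [lint_rho he s (f := fun X => U X ^ (θ + 1)) (h.mU.pow_const _)]; exact h.iU
  iV := by
    rw [lint_rho he s (f := fun X => V X ^ (κ + 1)) (h.mV.pow_const _)]; exact h.iV

lemma Sys.crit (h : Sys n lam κ θ α β U V) (hn : 1 ≤ n) (hlam : 0 < lam)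
    (hκ : 0 < κ) (hθ : 0 < θ) (hκθ : κ * θ = 1) : False := by
  set e : EuclideanSpace ℝ (Fin n) := EuclideanSpace.single ⟨0, hn⟩ 1 with he_def
  have he : ‖e‖ = 1 := by simp [he_def]
  have he0 : e ≠ 0 := by intro h0; rw [h0] at he; simp at he
  have hsym : ∀ s, ∀ X ∈ upperHalf n, U (_root_.rho e s X) = U X := fun s =>
    h.uniq (h.rho he s) hlam hκ hθ hκθ (lint_rho he s (f := fun X => U X ^ (θ + 1)) (h.mU.pow_const _))
  refine no_translation hθ h.mU h.iU h.pU (c := (2 : ℝ) • e) (by simpa using he0) ?_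
  intro X hX
  have h1 := hsym 1 _ (rho_mem e 0 hX)
  rw [hsym 0 X hX, rho_rho_trans he] at h1
  rw [← h1]; congr 3; norm_num

end crit

end PartF1

/-- Cylindrical symmetry of positive solutions of the Euler–Lagrange integral system. -/
theorem cylindrical_symmetry_euler_lagrange
    (n : ℕ) (hn : 1 ≤ n) (lam κ θ α β : ℝ)
    (hlam0 : 0 < lam) (hlam1 : lam < (n : ℝ) + 1)
    (hκ : 0 < κ) (hθ : 0 < θ) (hκθ : 1 ≤ κ * θ)
    (hα : α < 1 / (θ + 1)) (hβ : β < 1 / (κ + 1)) (hαβ : 0 ≤ α + β)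
    (hbal : 1 / (θ + 1) + 1 / (κ + 1) = (α + β + lam) / ((n : ℝ) + 1))
    (u v : EuclideanSpace ℝ (Fin n) × ℝ → ℝ)
    (hu_pos : ∀ X ∈ upperHalf n, 0 < u X)
    (hv_pos : ∀ X ∈ upperHalf n, 0 < v X)
    (hu_eq : ∀ X ∈ upperHalf n,
      ENNReal.ofReal (u X) = ENNReal.ofReal (X.2 ^ (-α)) *
        ∫⁻ Y in upperHalf n,
          ENNReal.ofReal (v Y ^ κ) * ENNReal.ofReal (Y.2 ^ (-β)) *
            ENNReal.ofReal (hsDist X Y) ^ (-lam))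
    (hv_eq : ∀ Y ∈ upperHalf n,
      ENNReal.ofReal (v Y) = ENNReal.ofReal (Y.2 ^ (-β)) *
        ∫⁻ X in upperHalf n,
          ENNReal.ofReal (u X ^ θ) * ENNReal.ofReal (X.2 ^ (-α)) *
            ENNReal.ofReal (hsDist X Y) ^ (-lam))
    (hu_int : (∫⁻ X in upperHalf n, ENNReal.ofReal (u X ^ (θ + 1))) < ⊤) :
    ∃ x₀ : EuclideanSpace ℝ (Fin n), ∀ t : ℝ, 0 < t →
      ∀ x x' : EuclideanSpace ℝ (Fin n),
        (‖x - x₀‖ = ‖x' - x₀‖ → u (x, t) = u (x', t) ∧ v (x, t) = v (x', t)) ∧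
        (‖x - x₀‖ ≤ ‖x' - x₀‖ → u (x', t) ≤ u (x, t) ∧ v (x', t) ≤ v (x, t)) := by
  have h := sys_of hlam0 hκ hθ hu_pos hv_pos hu_eq hv_eq hu_int
  have hmain : ∃ x0 : EuclideanSpace ℝ (Fin n), ∀ t : ℝ, 0 < t → ∀ x x' : EuclideanSpace ℝ (Fin n),
      ‖x - x0‖ ≤ ‖x' - x0‖ →
        (upperHalf n).indicator (fun Y => ENNReal.ofReal (u Y)) (x', t) ≤
          (upperHalf n).indicator (fun Y => ENNReal.ofReal (u Y)) (x, t) ∧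
        (upperHalf n).indicator (fun Y => ENNReal.ofReal (v Y)) (x', t) ≤
          (upperHalf n).indicator (fun Y => ENNReal.ofReal (v Y)) (x, t) := by
    rcases hκθ.eq_or_lt with h1 | h1
    · exact (h.crit hn hlam0 hκ hθ h1.symm).elim
    · rcases lt_or_ge 1 θ with h2 | h2
      · obtain ⟨ε, hε, key⟩ := h.key hlam0 hκ h2 h1 hα hβ hαβ hbal
        exact h.main hlam0 hκ hθ hε key
      · have h3 : 1 < κ := by
          by_contra hc
          nlinarith [not_lt.1 hc]
        obtain ⟨ε, hε, key⟩ := h.swap.key hlam0 hθ h3 (by linarith) hβ hα (by linarith)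
          (by rw [add_comm, hbal, add_comm α])
        obtain ⟨x0, hx0⟩ := h.swap.main hlam0 hθ hκ hε key
        exact ⟨x0, fun t ht x x' hxx => (hx0 t ht x x' hxx).symm⟩
  obtain ⟨x0, hx0⟩ := hmain
  have hfin : ∀ t : ℝ, 0 < t → ∀ x x' : EuclideanSpace ℝ (Fin n),
      ‖x - x0‖ ≤ ‖x' - x0‖ → u (x', t) ≤ u (x, t) ∧ v (x', t) ≤ v (x, t) := by
    intro t ht x x' hxx
    have hm : ((x, t) : EuclideanSpace ℝ (Fin n) × ℝ) ∈ upperHalf n := ht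
    have hm' : ((x', t) : EuclideanSpace ℝ (Fin n) × ℝ) ∈ upperHalf n := ht
    have h1 := hx0 t ht x x' hxx
    rw [Set.indicator_of_mem hm, Set.indicator_of_mem hm', Set.indicator_of_mem hm, Set.indicator_of_mem hm',
      ENNReal.ofReal_le_ofReal_iff (hu_pos _ hm).le, ENNReal.ofReal_le_ofReal_iff (hv_pos _ hm).le] at h1
    exact h1
  refine ⟨x0, fun t ht x x' => ⟨fun heq => ?_, hfin t ht x x'⟩⟩
  have a1 := hfin t ht x x' heq.le
  have a2 := hfin t ht x' x heq.ge
  exact ⟨le_antisymm a2.1 a1.1, le_antisymm a2.2 a1.2⟩
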